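/- arXiv:0708.3608 — 3 statements merged into one kernel-verified Lean document; each statement's English description precedes it below -/
import Mathlib

section
/- Let f : [0,1] → ℕ∞ be a preindicatrix. Then there exists a continuous function F : [0,1] → [0,1] with F(0) = 0 and F(1) = 1 such that for every y ∈ [0,1] the section F⁻¹(y) is countable and its extended natural cardinality equals f(y) (that is, F⁻¹(y) has exactly n elements when f(y) = n ∈ ℕ, and F⁻¹(y) is countably infinite when f(y) = ∞). -/
open Set

noncomputable section

/-- The section of `F` over `y`: the set of `x ∈ [0,1]` with `F x = y`. -/
def Sec (F : ℝ → ℝ) (y : ℝ) : Set ℝ := {x | x ∈ Set.Icc (0:ℝ) 1 ∧ F x = y}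

/-- Condition (1) for an `ℕ∞`-valued function `f` on `[0,1]`. -/
def Cond1 (f : ℝ → ℕ∞) : Prop :=
  (∀ y ∈ Set.Ioo (0:ℝ) 1, f y ≠ ⊤ →
    ∃ ε > 0, ∀ y₁ ∈ Set.Icc (0:ℝ) 1, ∀ y₂ ∈ Set.Icc (0:ℝ) 1,
      y - ε < y₁ → y₁ < y → y < y₂ → y₂ < y + ε →
      2 * f y ≤ f y₁ + f y₂ ∧
      (f y₁ + f y₂ = 2 * f y →
        (∃ k : ℕ, f y₁ = k ∧ Odd k) ∧ (∃ k : ℕ, f y₂ = k ∧ Odd k))) ∧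
  (f 0 ≠ ⊤ → ∃ ε > 0, ∀ y₂ ∈ Set.Icc (0:ℝ) 1, 0 < y₂ → y₂ < ε →
    2 * f 0 ≤ 1 + f y₂) ∧
  (f 1 ≠ ⊤ → ∃ ε > 0, ∀ y₁ ∈ Set.Icc (0:ℝ) 1, 1 - ε < y₁ → y₁ < 1 →
    2 * f 1 ≤ f y₁ + 1)

/-- Condition (**) for an `ℕ∞`-valued function `f` at the point `y ∈ [0,1]`,
with the convention that the term `f y₁` is replaced by `1` when `y = 0` and
the term `f y₂` is replaced by `1` when `y = 1`. -/
def CondStar (f : ℝ → ℕ∞) (y : ℝ) : Prop :=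
  ∀ n : ℕ, ∃ ε > 0,
    (∀ y₁ ∈ Set.Icc (0:ℝ) 1, ∀ y₂ ∈ Set.Icc (0:ℝ) 1,
      y - ε < y₁ → y₁ < y → y < y₂ → y₂ < y + ε → (n : ℕ∞) ≤ f y₁ + f y₂) ∧
    (y = 0 → ∀ y₂ ∈ Set.Icc (0:ℝ) 1, 0 < y₂ → y₂ < ε → (n : ℕ∞) ≤ 1 + f y₂) ∧
    (y = 1 → ∀ y₁ ∈ Set.Icc (0:ℝ) 1, 1 - ε < y₁ → y₁ < 1 → (n : ℕ∞) ≤ f y₁ + 1)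

/-- A preindicatrix: an `ℕ∞`-valued function on `[0,1]` with values `≥ 1`,
satisfying Condition (1) and Condition (**) at every `y` with `f y = ∞`. -/
def Preindicatrix (f : ℝ → ℕ∞) : Prop :=
  (∀ y ∈ Set.Icc (0:ℝ) 1, 1 ≤ f y) ∧ Cond1 f ∧
    (∀ y ∈ Set.Icc (0:ℝ) 1, f y = ⊤ → CondStar f y)

def exc (p q u : ℝ) : ℝ := 4*p*max 0 (min u (1/2-u)) - 4*q*max 0 (min (u-1/2) (1-u))

lemma exc_cont (p q : ℝ) : Continuous (exc p q) := by unfold exc; fun_prop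

lemma exc_left (p q u : ℝ) (h : u ≤ 0) : exc p q u = 0 := by
  unfold exc
  rw [max_eq_left (le_trans (min_le_left _ _) h), max_eq_left (le_trans (min_le_left _ _) (by linarith))]
  ring

lemma exc_right (p q u : ℝ) (h : 1 ≤ u) : exc p q u = 0 := by
  unfold exc
  rw [max_eq_left (le_trans (min_le_right _ _) (by linarith)), max_eq_left (le_trans (min_le_right _ _) (by linarith))]
  ring

lemma exc_q1 (p q u : ℝ) (h0 : 0 ≤ u) (h1 : u ≤ 1/4) : exc p q u = 4*p*u := by
  unfold exc
  rw [min_eq_left (by linarith), max_eq_right h0, max_eq_left (le_trans (min_le_left _ _) (by linarith))]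
  ring

lemma exc_q2 (p q u : ℝ) (h0 : 1/4 ≤ u) (h1 : u ≤ 1/2) : exc p q u = 4*p*(1/2-u) := by
  unfold exc
  rw [min_eq_right (by linarith), max_eq_right (by linarith), max_eq_left (le_trans (min_le_left _ _) (by linarith))]
  ring

lemma exc_q3 (p q u : ℝ) (h0 : 1/2 ≤ u) (h1 : u ≤ 3/4) : exc p q u = -4*q*(u-1/2) := by
  unfold exc
  rw [max_eq_left (le_trans (min_le_right _ _) (by linarith)), min_eq_left (by linarith), max_eq_right (by linarith)]
  ring

lemma exc_q4 (p q u : ℝ) (h0 : 3/4 ≤ u) (h1 : u ≤ 1) : exc p q u = -4*q*(1-u) := by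
  unfold exc
  rw [max_eq_left (le_trans (min_le_right _ _) (by linarith)), min_eq_right (by linarith), max_eq_right (by linarith)]
  ring

lemma exc_mem (p q u : ℝ) (hp : 0 < p) (hq : 0 < q) : -q ≤ exc p q u ∧ exc p q u ≤ p := by
  rcases le_total u 0 with h | h
  · rw [exc_left _ _ _ h]; constructor <;> linarith
  rcases le_total 1 u with h' | h'
  · rw [exc_right _ _ _ h']; constructor <;> linarith
  rcases le_total u (1/4) with h1 | h1
  · rw [exc_q1 _ _ _ h h1]; constructor <;> nlinarith
  rcases le_total u (1/2) with h2 | h2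
  · rw [exc_q2 _ _ _ h1 h2]; constructor <;> nlinarith
  rcases le_total u (3/4) with h3 | h3
  · rw [exc_q3 _ _ _ h2 h3]; constructor <;> nlinarith
  · rw [exc_q4 _ _ _ h3 h']; constructor <;> nlinarith

def U1 (p q v : ℝ) : ℝ := if 0 ≤ v then 1/2 - v/(4*p) else 1/2 - v/(4*q)
def U2 (p q v : ℝ) : ℝ := if 0 < v then v/(4*p) else 1 + v/(4*q)

lemma U1_spec (p q v : ℝ) (hp : 0 < p) (hq : 0 < q) (h : v ∈ Ico (-q) p) :
    U1 p q v ∈ Ioc (0:ℝ) 1 ∧ exc p q (U1 p q v) = v := by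
  obtain ⟨h1, h2⟩ := h
  unfold U1
  split_ifs with hv
  · have e1 : v/(4*p) ≤ 1/4 := by rw [div_le_div_iff₀] <;> linarith
    have e2 : 0 ≤ v/(4*p) := by positivity
    refine ⟨⟨by linarith, by linarith⟩, ?_⟩
    rw [exc_q2 _ _ _ (by linarith) (by linarith)]
    field_simp; ring
  · push Not at hv
    have e1 : -(1/4) ≤ v/(4*q) := by rw [le_div_iff₀] <;> linarith
    have e2 : v/(4*q) ≤ 0 := div_nonpos_of_nonpos_of_nonneg hv.le (by linarith)
    refine ⟨⟨by linarith, by linarith⟩, ?_⟩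
    rw [exc_q3 _ _ _ (by linarith) (by linarith)]
    field_simp; ring

lemma U2_spec (p q v : ℝ) (hp : 0 < p) (hq : 0 < q) (h : v ∈ Ioc (-q) p) :
    U2 p q v ∈ Ioc (0:ℝ) 1 ∧ exc p q (U2 p q v) = v := by
  obtain ⟨h1, h2⟩ := h
  unfold U2
  split_ifs with hv
  · have e1 : v/(4*p) ≤ 1/4 := by rw [div_le_div_iff₀] <;> linarith
    have e2 : 0 < v/(4*p) := by positivity
    refine ⟨⟨by linarith, by linarith⟩, ?_⟩
    rw [exc_q1 _ _ _ (by linarith) (by linarith)]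
    field_simp
  · push Not at hv
    have e1 : -(1/4) ≤ v/(4*q) := by rw [le_div_iff₀] <;> linarith
    have e2 : v/(4*q) ≤ 0 := div_nonpos_of_nonpos_of_nonneg hv (by linarith)
    refine ⟨⟨by linarith, by linarith⟩, ?_⟩
    rw [exc_q4 _ _ _ (by linarith) (by linarith)]
    field_simp; ring

lemma U_ne (p q v : ℝ) (_ : 0 < p) (_ : 0 < q) (h : v ∈ Ico (-q) p) (h' : v ∈ Ioc (-q) p) :
    U1 p q v ≠ U2 p q v := by
  obtain ⟨h1, h2⟩ := h
  obtain ⟨h3, -⟩ := h'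
  unfold U1 U2
  rcases lt_trichotomy v 0 with hv | hv | hv
  · rw [if_neg (by linarith), if_neg (by linarith)]
    have e1 : -(1/4) < v/(4*q) := by rw [lt_div_iff₀] <;> linarith
    intro h; linarith
  · subst hv; norm_num
  · rw [if_pos hv.le, if_pos hv]
    have e1 : v/(4*p) < 1/4 := by rw [div_lt_div_iff₀] <;> linarith
    intro h; linarith

lemma U_surj (p q u : ℝ) (hp : 0 < p) (hq : 0 < q) (h : u ∈ Ioc (0:ℝ) 1) :
    (exc p q u ∈ Ico (-q) p ∧ u = U1 p q (exc p q u)) ∨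
    (exc p q u ∈ Ioc (-q) p ∧ u = U2 p q (exc p q u)) := by
  obtain ⟨h, h'⟩ := h
  rcases le_total u (1/4) with h1 | h1
  · right
    rw [exc_q1 _ _ _ h.le h1]
    refine ⟨⟨by nlinarith, by nlinarith⟩, ?_⟩
    rw [U2, if_pos (by positivity)]; field_simp
  rcases h1.eq_or_lt with h1' | h1'
  · right
    rw [exc_q1 _ _ _ h.le h1'.ge]
    refine ⟨⟨by nlinarith, by nlinarith⟩, ?_⟩
    rw [U2, if_pos (by positivity)]; field_simp
  rcases le_total u (1/2) with h2 | h2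
  · left
    rw [exc_q2 _ _ _ h1 h2]
    refine ⟨⟨by nlinarith, by nlinarith⟩, ?_⟩
    rw [U1, if_pos (mul_nonneg (by linarith) (by linarith))]; field_simp; ring
  rcases h2.eq_or_lt with h2' | h2'
  · left
    rw [exc_q2 _ _ _ h1 h2'.ge]
    refine ⟨⟨by nlinarith, by nlinarith⟩, ?_⟩
    rw [U1, if_pos (mul_nonneg (by linarith) (by linarith))]; field_simp; ring
  rcases le_total u (3/4) with h3 | h3
  · left
    rw [exc_q3 _ _ _ h2 h3]
    refine ⟨⟨by nlinarith, by nlinarith⟩, ?_⟩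
    rw [U1, if_neg (by nlinarith)]; field_simp; ring
  rcases h3.eq_or_lt with h3' | h3'
  · left
    rw [exc_q3 _ _ _ h2 h3'.ge]
    refine ⟨⟨by nlinarith, by nlinarith⟩, ?_⟩
    rw [U1, if_neg (by nlinarith)]; field_simp; ring
  · right
    rw [exc_q4 _ _ _ h3 h']
    refine ⟨⟨by nlinarith, by nlinarith⟩, ?_⟩
    rw [U2, if_neg (by nlinarith)]; field_simp; ring

lemma chop (P Q : Set ℝ) (δ : ℝ) (hδ : 0 < δ)
    (hP : ∀ y ∈ P, ∃ ε > 0, ∀ z ∈ Ioo (y-ε) y, z ∈ P ∧ z ∈ Q)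
    (hQ : ∀ y ∈ Q, ∃ ε > 0, ∀ z ∈ Ioo y (y+ε), z ∈ P ∧ z ∈ Q) :
    ∃ 𝓕 : Set (ℝ × ℝ),
      (∀ p ∈ 𝓕, p.1 < p.2 ∧ p.2 - p.1 ≤ δ ∧ Ioc p.1 p.2 ⊆ P ∧ Ico p.1 p.2 ⊆ Q) ∧
      (∀ y ∈ P, ∃ p ∈ 𝓕, y ∈ Ioc p.1 p.2) ∧
      (∀ y ∈ Q, ∃ p ∈ 𝓕, y ∈ Ico p.1 p.2) ∧
      (∀ p ∈ 𝓕, ∀ q ∈ 𝓕, ∀ z, z ∈ Ioo p.1 p.2 → z ∈ Ioo q.1 q.2 → p = q) := by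
  -- special points are countable
  have cP : (P \ Q).Countable := by
    choose! ε hε hε' using hP
    have : ∀ y : ℝ, ∃ r : ℚ, y ∈ P → (r:ℝ) ∈ Ioo (y - ε y) y := by
      intro y
      by_cases hy : y ∈ P
      · obtain ⟨r, h1, h2⟩ := exists_rat_btwn (show y - ε y < y by linarith [hε y hy])
        exact ⟨r, fun _ => ⟨h1, h2⟩⟩
      · exact ⟨0, fun h => absurd h hy⟩
    choose r hr using this
    refine MapsTo.countable_of_injOn (f := r) (t := univ) (fun _ _ => mem_univ _) ?_ (to_countable _)
    have key : ∀ x ∈ P \ Q, ∀ y ∈ P \ Q, r x = r y → ¬ x < y := by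
      intro x hx y hy h hxy
      have h1 := hr x hx.1
      have h2 := hr y hy.1
      rw [h] at h1
      exact hx.2 (hε' y hy.1 x ⟨by linarith [h2.1, h1.2], hxy⟩).2
    intro x hx y hy h
    rcases lt_trichotomy x y with h1 | h1 | h1
    · exact absurd h1 (key x hx y hy h)
    · exact h1
    · exact absurd h1 (key y hy x hx h.symm)
  have cQ : (Q \ P).Countable := by
    choose! ε hε hε' using hQ
    have : ∀ y : ℝ, ∃ r : ℚ, y ∈ Q → (r:ℝ) ∈ Ioo y (y + ε y) := by
      intro y
      by_cases hy : y ∈ Q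
      · obtain ⟨r, h1, h2⟩ := exists_rat_btwn (show y < y + ε y by linarith [hε y hy])
        exact ⟨r, fun _ => ⟨h1, h2⟩⟩
      · exact ⟨0, fun h => absurd h hy⟩
    choose r hr using this
    refine MapsTo.countable_of_injOn (f := r) (t := univ) (fun _ _ => mem_univ _) ?_ (to_countable _)
    have key : ∀ x ∈ Q \ P, ∀ y ∈ Q \ P, r x = r y → ¬ x < y := by
      intro x hx y hy h hxy
      have h1 := hr x hx.1
      have h2 := hr y hy.1
      rw [h] at h1
      exact hy.2 (hε' x hx.1 y ⟨hxy, by linarith [h2.1, h1.2]⟩).1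
    intro x hx y hy h
    rcases lt_trichotomy x y with h1 | h1 | h1
    · exact absurd h1 (key x hx y hy h)
    · exact h1
    · exact absurd h1 (key y hy x hx h.symm)
  obtain ⟨Δ, hΔ⟩ : ∃ Δ : Set ℝ, Δ = (P \ Q) ∪ (Q \ P) ∪ range (fun r : ℚ => (r:ℝ)) := ⟨_, rfl⟩
  have cΔ : Δ.Countable := by
    rw [hΔ]; exact (cP.union cQ).union (countable_range _)
  have ratΔ : ∀ r : ℚ, (r:ℝ) ∈ Δ := fun r => by rw [hΔ]; exact Or.inr ⟨r, rfl⟩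
  obtain ⟨e, he⟩ := cΔ.exists_eq_range ⟨_, ratΔ 0⟩
  let D : ℕ → Finset ℝ := fun n => (Finset.range n).image e
  have Dmono : ∀ m n, m ≤ n → ∀ x ∈ D m, x ∈ D n := by
    intro m n h x hx
    exact Finset.image_subset_image (Finset.range_mono h) hx
  have Dex : ∀ x ∈ Δ, ∃ n, x ∈ D n := by
    intro x hx
    rw [he] at hx
    obtain ⟨i, rfl⟩ := hx
    exact ⟨i+1, Finset.mem_image_of_mem _ (Finset.mem_range.2 (Nat.lt_succ_self i))⟩
  let good : ℝ → ℝ → Prop := fun s t => s < t ∧ t - s ≤ δ ∧ Ioc s t ⊆ P ∧ Ico s t ⊆ Q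
  have good_mono : ∀ s t s' t', good s t → s ≤ s' → t' ≤ t → s' < t' → good s' t' := by
    rintro s t s' t' ⟨h1, h2, h3, h4⟩ h5 h6 h7
    exact ⟨h7, by linarith, (Ioc_subset_Ioc h5 h6).trans h3, (Ico_subset_Ico h5 h6).trans h4⟩
  let cell : ℕ → ℝ × ℝ → Prop := fun n p =>
    p.1 ∈ D n ∧ p.2 ∈ D n ∧ good p.1 p.2 ∧ ∀ d ∈ D n, d ∉ Ioo p.1 p.2
  -- nestedness
  have nest : ∀ m n p q z, m ≤ n → cell m p → cell n q → z ∈ Ioo p.1 p.2 → z ∈ Ioo q.1 q.2 →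
      p.1 ≤ q.1 ∧ q.2 ≤ p.2 := by
    rintro m n p q z hmn ⟨a1, a2, -, -⟩ ⟨-, -, -, b4⟩ hz1 hz2
    constructor
    · by_contra h
      push Not at h
      exact b4 _ (Dmono m n hmn _ a1) ⟨h, hz1.1.trans hz2.2⟩
    · by_contra h
      push Not at h
      exact b4 _ (Dmono m n hmn _ a2) ⟨hz2.1.trans hz1.2, h⟩
  let 𝓕 : Set (ℝ × ℝ) := {p | ∃ n, cell n p ∧ ∀ m < n, ∀ q, cell m q →
    ∀ z, z ∈ Ioo p.1 p.2 → z ∉ Ioo q.1 q.2}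
  have exP : ∀ y ∈ P, ∃ s ∈ Δ, ∃ t ∈ Δ, good s t ∧ y ∈ Ioc s t := by
    intro y hy
    obtain ⟨ε, hε, h⟩ := hP y hy
    by_cases hyQ : y ∈ Q
    · obtain ⟨η, hη, h'⟩ := hQ y hyQ
      obtain ⟨r, hr1, hr2⟩ := exists_rat_btwn (show y - min ε (δ/2) < y by
        have : 0 < min ε (δ/2) := lt_min hε (by linarith)
        linarith)
      obtain ⟨r', hr1', hr2'⟩ := exists_rat_btwn (show y < y + min η (δ/2) by
        have : 0 < min η (δ/2) := lt_min hη (by linarith)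
        linarith)
      have i1 := min_le_left ε (δ/2)
      have i2 := min_le_right ε (δ/2)
      have i3 := min_le_left η (δ/2)
      have i4 := min_le_right η (δ/2)
      have all : ∀ z ∈ Icc (r:ℝ) r', z ∈ P ∧ z ∈ Q := by
        rintro z ⟨z1, z2⟩
        rcases lt_trichotomy z y with hz | hz | hz
        · exact h z ⟨by linarith, hz⟩
        · rw [hz]; exact ⟨hy, hyQ⟩
        · exact h' z ⟨hz, by linarith⟩
      exact ⟨r, ratΔ r, r', ratΔ r', ⟨by linarith, by linarith,
        fun z hz => (all z ⟨hz.1.le, hz.2⟩).1, fun z hz => (all z ⟨hz.1, hz.2.le⟩).2⟩, hr2, hr1'.le⟩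
    · obtain ⟨r, hr1, hr2⟩ := exists_rat_btwn (show y - min ε δ < y by
        have : 0 < min ε δ := lt_min hε (by linarith)
        linarith)
      have i1 := min_le_left ε δ
      have i2 := min_le_right ε δ
      refine ⟨r, ratΔ r, y, by rw [hΔ]; exact Or.inl (Or.inl ⟨hy, hyQ⟩), ⟨hr2, by linarith, ?_, ?_⟩,
        hr2, le_rfl⟩
      · rintro z ⟨z1, z2⟩
        rcases z2.eq_or_lt with rfl | hz
        · exact hy
        · exact (h z ⟨by linarith, hz⟩).1
      · rintro z ⟨z1, z2⟩
        exact (h z ⟨by linarith, z2⟩).2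
  have exQ : ∀ y ∈ Q, ∃ s ∈ Δ, ∃ t ∈ Δ, good s t ∧ y ∈ Ico s t := by
    intro y hy
    obtain ⟨ε, hε, h⟩ := hQ y hy
    by_cases hyP : y ∈ P
    · obtain ⟨η, hη, h'⟩ := hP y hyP
      obtain ⟨r, hr1, hr2⟩ := exists_rat_btwn (show y - min η (δ/2) < y by
        have : 0 < min η (δ/2) := lt_min hη (by linarith)
        linarith)
      obtain ⟨r', hr1', hr2'⟩ := exists_rat_btwn (show y < y + min ε (δ/2) by
        have : 0 < min ε (δ/2) := lt_min hε (by linarith)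
        linarith)
      have i1 := min_le_left ε (δ/2)
      have i2 := min_le_right ε (δ/2)
      have i3 := min_le_left η (δ/2)
      have i4 := min_le_right η (δ/2)
      have all : ∀ z ∈ Icc (r:ℝ) r', z ∈ P ∧ z ∈ Q := by
        rintro z ⟨z1, z2⟩
        rcases lt_trichotomy z y with hz | hz | hz
        · exact h' z ⟨by linarith, hz⟩
        · rw [hz]; exact ⟨hyP, hy⟩
        · exact h z ⟨hz, by linarith⟩
      exact ⟨r, ratΔ r, r', ratΔ r', ⟨by linarith, by linarith,
        fun z hz => (all z ⟨hz.1.le, hz.2⟩).1, fun z hz => (all z ⟨hz.1, hz.2.le⟩).2⟩, hr2.le, hr1'⟩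
    · obtain ⟨r, hr1, hr2⟩ := exists_rat_btwn (show y < y + min ε δ by
        have : 0 < min ε δ := lt_min hε (by linarith)
        linarith)
      have i1 := min_le_left ε δ
      have i2 := min_le_right ε δ
      refine ⟨y, by rw [hΔ]; exact Or.inl (Or.inr ⟨hy, hyP⟩), r, ratΔ r, ⟨hr1, by linarith, ?_, ?_⟩,
        le_rfl, hr1⟩
      · rintro z ⟨z1, z2⟩
        exact (h z ⟨z1, by linarith⟩).1
      · rintro z ⟨z1, z2⟩
        rcases z1.eq_or_lt with rfl | hz
        · exact hy
        · exact (h z ⟨hz, by linarith⟩).2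
  have cellP : ∀ y ∈ P, ∃ n p, cell n p ∧ y ∈ Ioc p.1 p.2 := by
    intro y hy
    obtain ⟨s, hs, t, ht, hg, hst⟩ := exP y hy
    obtain ⟨n1, hn1⟩ := Dex s hs
    obtain ⟨n2, hn2⟩ := Dex t ht
    have hs' := Dmono _ (max n1 n2) (le_max_left _ _) _ hn1
    have ht' := Dmono _ (max n1 n2) (le_max_right _ _) _ hn2
    generalize max n1 n2 = n at hs' ht'
    obtain ⟨s', hs1, hs2⟩ := ((D n).filter (· < y)).exists_max_image id
      ⟨s, Finset.mem_filter.2 ⟨hs', hst.1⟩⟩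
    obtain ⟨t', ht1, ht2⟩ := ((D n).filter (y ≤ ·)).exists_min_image id
      ⟨t, Finset.mem_filter.2 ⟨ht', hst.2⟩⟩
    simp only [Finset.mem_filter, id] at hs1 hs2 ht1 ht2
    refine ⟨n, (s', t'), ⟨hs1.1, ht1.1, good_mono _ _ _ _ hg (hs2 _ ⟨hs', hst.1⟩) (ht2 _ ⟨ht', hst.2⟩)
      (hs1.2.trans_le ht1.2), ?_⟩, hs1.2, ht1.2⟩
    rintro d hd ⟨h1, h2⟩
    rcases lt_or_ge d y with h | h
    · exact absurd (hs2 d ⟨hd, h⟩) (not_le.2 h1)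
    · exact absurd (ht2 d ⟨hd, h⟩) (not_le.2 h2)
  have cellQ : ∀ y ∈ Q, ∃ n p, cell n p ∧ y ∈ Ico p.1 p.2 := by
    intro y hy
    obtain ⟨s, hs, t, ht, hg, hst⟩ := exQ y hy
    obtain ⟨n1, hn1⟩ := Dex s hs
    obtain ⟨n2, hn2⟩ := Dex t ht
    have hs' := Dmono _ (max n1 n2) (le_max_left _ _) _ hn1
    have ht' := Dmono _ (max n1 n2) (le_max_right _ _) _ hn2
    generalize max n1 n2 = n at hs' ht'
    obtain ⟨s', hs1, hs2⟩ := ((D n).filter (· ≤ y)).exists_max_image id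
      ⟨s, Finset.mem_filter.2 ⟨hs', hst.1⟩⟩
    obtain ⟨t', ht1, ht2⟩ := ((D n).filter (y < ·)).exists_min_image id
      ⟨t, Finset.mem_filter.2 ⟨ht', hst.2⟩⟩
    simp only [Finset.mem_filter, id] at hs1 hs2 ht1 ht2
    refine ⟨n, (s', t'), ⟨hs1.1, ht1.1, good_mono _ _ _ _ hg (hs2 _ ⟨hs', hst.1⟩) (ht2 _ ⟨ht', hst.2⟩)
      (hs1.2.trans_lt ht1.2), ?_⟩, hs1.2, ht1.2⟩
    rintro d hd ⟨h1, h2⟩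
    rcases le_or_gt d y with h | h
    · exact absurd (hs2 d ⟨hd, h⟩) (not_le.2 h1)
    · exact absurd (ht2 d ⟨hd, h⟩) (not_le.2 h2)
  classical
  refine ⟨𝓕, ?_, ?_, ?_, ?_⟩
  · rintro p ⟨n, hn, -⟩
    exact hn.2.2.1
  · intro y hy
    have hex := cellP y hy
    obtain ⟨p, hp, hyp⟩ := Nat.find_spec hex
    refine ⟨p, ⟨_, hp, ?_⟩, hyp⟩
    intro m hm q hq z hz hz'
    apply Nat.find_min hex hm
    obtain ⟨h1, h2⟩ := nest _ _ _ _ z hm.le hq hp hz' hz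
    exact ⟨q, hq, h1.trans_lt hyp.1, hyp.2.trans h2⟩
  · intro y hy
    have hex := cellQ y hy
    obtain ⟨p, hp, hyp⟩ := Nat.find_spec hex
    refine ⟨p, ⟨_, hp, ?_⟩, hyp⟩
    intro m hm q hq z hz hz'
    apply Nat.find_min hex hm
    obtain ⟨h1, h2⟩ := nest _ _ _ _ z hm.le hq hp hz' hz
    exact ⟨q, hq, h1.trans hyp.1, hyp.2.trans_le h2⟩
  · rintro p ⟨n, hn, hn'⟩ q ⟨m, hm, hm'⟩ z hzp hzq
    rcases lt_trichotomy m n with h | h | h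
    · exact absurd hzq (hn' m h q hm z hzp)
    · subst h
      obtain ⟨h1, h2⟩ := nest _ _ _ _ z le_rfl hn hm hzp hzq
      obtain ⟨h3, h4⟩ := nest _ _ _ _ z le_rfl hm hn hzq hzp
      exact Prod.ext (le_antisymm h1 h3) (le_antisymm h4 h2)
    · exact absurd hzp (hm' n h p hn z hzq)

open Filter Topology in
lemma base_exists {ι : Type} (c w : ι → ℝ) (hw : ∀ i, 0 < w i) (hs : Summable w)
    (hc : Function.Injective c) :
    ∃ (X Y B : ℝ → ℝ), (∀ y, y ≤ X y) ∧ (∀ y, X y ≤ Y y) ∧ (∀ y, Y y ≤ y + ∑' i, w i) ∧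
      (∀ y y', y < y' → Y y + (y' - y) ≤ X y') ∧
      (∀ i, Y (c i) = X (c i) + w i) ∧ (∀ y, (∀ i, c i ≠ y) → Y y = X y) ∧
      (∀ y, (∀ i, c i < y) → X y = y + ∑' i, w i) ∧
      (∀ y, (∀ i, y < c i) → X y = y) ∧
      (∀ x, X (B x) ≤ x ∧ x ≤ Y (B x)) := by
  classical
  let X : ℝ → ℝ := fun y => y + ∑' i, if c i < y then w i else 0
  let Y : ℝ → ℝ := fun y => y + ∑' i, if c i ≤ y then w i else 0
  have sX : ∀ y, Summable (fun i => if c i < y then w i else 0) := fun y =>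
    Summable.of_nonneg_of_le (fun i => by split_ifs <;> simp [(hw i).le])
      (fun i => by split_ifs <;> simp [(hw i).le]) hs
  have sY : ∀ y, Summable (fun i => if c i ≤ y then w i else 0) := fun y =>
    Summable.of_nonneg_of_le (fun i => by split_ifs <;> simp [(hw i).le])
      (fun i => by split_ifs <;> simp [(hw i).le]) hs
  have h1 : ∀ y, y ≤ X y := fun y => by
    have : 0 ≤ ∑' i, if c i < y then w i else 0 :=
      tsum_nonneg (fun i => by split_ifs <;> simp [(hw i).le])
    simp only [X]; linarith
  have h2 : ∀ y, X y ≤ Y y := fun y => by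
    have := (sX y).tsum_le_tsum (g := fun i => if c i ≤ y then w i else 0) (fun i => by
      split_ifs with a b
      · rfl
      · exact absurd a.le b
      · exact (hw i).le
      · rfl) (sY y)
    simp only [X, Y]; linarith
  have h3 : ∀ y, Y y ≤ y + ∑' i, w i := fun y => by
    have := (sY y).tsum_le_tsum (g := w) (fun i => by
      split_ifs <;> simp [(hw i).le]) hs
    simp only [Y]; linarith
  have h4 : ∀ y y', y < y' → Y y + (y' - y) ≤ X y' := fun y y' h => by
    have := (sY y).tsum_le_tsum (g := fun i => if c i < y' then w i else 0) (fun i => by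
      split_ifs with a b
      · rfl
      · exact absurd (a.trans_lt h) b
      · exact (hw i).le
      · rfl) (sX y')
    simp only [X, Y]; linarith
  have Xmono : ∀ y y', y ≤ y' → X y ≤ X y' := fun y y' h => by
    rcases h.eq_or_lt with rfl | h
    · rfl
    · linarith [h2 y, h4 y y' h]
  have contX : ∀ y, Tendsto X (𝓝[<] y) (𝓝 (X y)) := by
    intro y
    refine Tendsto.add (tendsto_id.mono_left nhdsWithin_le_nhds) ?_
    refine tendsto_tsum_of_dominated_convergence (bound := w) hs ?_ ?_
    · intro i
      apply tendsto_nhds_of_eventually_eq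
      by_cases hi : c i < y
      · filter_upwards [Ioo_mem_nhdsLT hi] with z hz
        rw [if_pos hz.1, if_pos hi]
      · filter_upwards [self_mem_nhdsWithin] with z hz
        rw [if_neg hi, if_neg (by have : z < y := hz; linarith)]
    · refine Eventually.of_forall (fun z i => ?_)
      split_ifs <;> simp [abs_of_pos (hw i), (hw i).le]
  have contY : ∀ y, Tendsto X (𝓝[>] y) (𝓝 (Y y)) := by
    intro y
    refine Tendsto.add (tendsto_id.mono_left nhdsWithin_le_nhds) ?_
    refine tendsto_tsum_of_dominated_convergence (bound := w) hs ?_ ?_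
    · intro i
      apply tendsto_nhds_of_eventually_eq
      by_cases hi : c i ≤ y
      · filter_upwards [self_mem_nhdsWithin] with z hz
        rw [if_pos hi, if_pos (by have : y < z := hz; linarith)]
      · push Not at hi
        filter_upwards [Ioo_mem_nhdsGT hi] with z hz
        rw [if_neg (not_lt.2 hz.2.le), if_neg (not_le.2 hi)]
    · refine Eventually.of_forall (fun z i => ?_)
      split_ifs <;> simp [abs_of_pos (hw i), (hw i).le]
  have ex : ∀ x, ∃ y, X y ≤ x ∧ x ≤ Y y := by
    intro x
    have ne : {y | X y ≤ x}.Nonempty := ⟨x - ∑' i, w i, by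
      show X _ ≤ x
      linarith [h2 (x - ∑' i, w i), h3 (x - ∑' i, w i)]⟩
    have bd : BddAbove {y | X y ≤ x} := ⟨x, fun y (hy : X y ≤ x) => (h1 y).trans hy⟩
    refine ⟨sSup {y | X y ≤ x}, ?_, ?_⟩
    · refine le_of_tendsto (contX _) ?_
      filter_upwards [self_mem_nhdsWithin] with z hz
      obtain ⟨y, hy, hzy⟩ := exists_lt_of_lt_csSup ne hz
      exact (Xmono _ _ hzy.le).trans hy
    · refine ge_of_tendsto (contY _) ?_
      filter_upwards [self_mem_nhdsWithin] with z hz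
      by_contra h
      push Not at h
      exact absurd (le_csSup bd h.le) (not_le.2 hz)
  choose B hB using ex
  refine ⟨X, Y, B, h1, h2, h3, h4, ?_, ?_, ?_, ?_, hB⟩
  · intro i
    have : (fun j => if c j ≤ c i then w j else 0) =
        fun j => (if c j < c i then w j else 0) + (if j = i then w i else 0) := by
      funext j
      by_cases hj : j = i
      · subst hj; simp
      · have : c j ≠ c i := fun h => hj (hc h)
        simp only [hj, if_false, add_zero, this.le_iff_lt]
    simp only [X, Y]
    rw [this, (sX _).tsum_add ⟨w i, by simpa using hasSum_ite_eq i (w i)⟩, tsum_ite_eq, add_assoc]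
  · intro y hy
    simp only [X, Y, fun i => (hy i).le_iff_lt]
  · intro y hy
    simp only [X, hy, if_true]
  · intro y hy
    simp only [X, fun i => not_lt.2 (hy i).le, if_false, tsum_zero, add_zero]

lemma inj_choice {ι : Type} [Countable ι] (a b : ι → ℝ) (hab : ∀ i, a i < b i) :
    ∃ c : ι → ℝ, Function.Injective c ∧ ∀ i, a i < c i ∧ c i < b i := by
  obtain ⟨e, he⟩ := exists_injective_nat ι
  have : ∀ i, ∃ r : ℚ, a i - √2 * e i < r ∧ (r:ℝ) < b i - √2 * e i := fun i =>
    exists_rat_btwn (by linarith [hab i])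
  choose r hr using this
  refine ⟨fun i => r i + √2 * e i, ?_, fun i => ⟨by linarith [(hr i).1], by linarith [(hr i).2]⟩⟩
  intro i j h
  by_contra hij
  have hne : (e i : ℝ) - e j ≠ 0 := by
    rw [sub_ne_zero]; exact fun h => hij (he (by exact_mod_cast h))
  have h' : √2 = ((r j - r i) / (e i - e j) : ℚ) := by
    push_cast
    rw [eq_div_iff hne]
    dsimp only at h
    linarith
  exact irrational_sqrt_two ⟨_, h'.symm⟩

open Filter Topology in
lemma realize {ι : Type} [Countable ι] (a b : ι → ℝ) (hab : ∀ i, a i < b i)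
    (ha : ∀ i, 0 ≤ a i) (hb : ∀ i, b i ≤ 1)
    (hfin : ∀ ε > 0, {i | ε < b i - a i}.Finite) :
    ∃ F : ℝ → ℝ, ContinuousOn F (Set.Icc 0 1) ∧
      Set.MapsTo F (Set.Icc 0 1) (Set.Icc 0 1) ∧ F 0 = 0 ∧ F 1 = 1 ∧
      ∀ y ∈ Set.Icc (0:ℝ) 1, (Sec F y).Countable ∧ (Sec F y).encard =
        1 + {i | y ∈ Ioc (a i) (b i)}.encard + {i | y ∈ Ico (a i) (b i)}.encard := by
  classical
  obtain ⟨c, hc, hcab⟩ := inj_choice a b hab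
  obtain ⟨w, hw, hs⟩ : ∃ w : ι → ℝ, (∀ i, 0 < w i) ∧ Summable w := by
    have := Encodable.ofCountable ι
    obtain ⟨w, hw, s, h, -⟩ := posSumOfEncodable one_pos ι
    exact ⟨w, hw, s, h⟩
  obtain ⟨X, Y, B, h1, h2, h3, h4, h5, h6, h7, h8, hB⟩ := base_exists c w hw hs hc
  have S0 : 0 ≤ ∑' i, w i := tsum_nonneg fun i => (hw i).le
  generalize (∑' i, w i) = S at *
  have uniq : ∀ x y, X y ≤ x → x ≤ Y y → B x = y := by
    intro x y hx hy
    rcases lt_trichotomy (B x) y with h | h | h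
    · linarith [h4 _ _ h, (hB x).1, (hB x).2]
    · exact h
    · linarith [h4 _ _ h, (hB x).1, (hB x).2]
  have Bmono : ∀ x x', x ≤ x' → B x ≤ B x' := by
    intro x x' h
    by_contra h'
    push Not at h'
    linarith [h4 _ _ h', (hB x).1, (hB x').2]
  have Bcont : Continuous B := by
    refine (LipschitzWith.of_le_add (f := B) ?_).continuous
    intro x x'
    rcases le_or_gt (B x) (B x') with h | h
    · linarith [dist_nonneg (x := x) (y := x')]
    · rw [Real.dist_eq]
      linarith [h4 _ _ h, (hB x).1, (hB x').2, le_abs_self (x - x')]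
  let p : ι → ℝ := fun i => b i - c i
  let q : ι → ℝ := fun i => c i - a i
  have hp : ∀ i, 0 < p i := fun i => sub_pos.2 (hcab i).2
  have hq : ∀ i, 0 < q i := fun i => sub_pos.2 (hcab i).1
  let g : ι → ℝ → ℝ := fun i x => exc (p i) (q i) ((x - X (c i)) / w i)
  have gcont : ∀ i, Continuous (g i) := fun i =>
    (exc_cont _ _).comp (by fun_prop)
  have gzero : ∀ i x, B x ≠ c i → g i x = 0 := by
    intro i x hx
    rcases le_total x (X (c i)) with h | h
    · exact exc_left _ _ _ (div_nonpos_of_nonpos_of_nonneg (by linarith) (hw i).le)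
    · refine exc_right _ _ _ ?_
      rw [le_div_iff₀ (hw i)]
      by_contra h'
      push Not at h'
      exact hx (uniq _ _ h (by rw [h5]; linarith))
  let F : ℝ → ℝ := fun x => if h : ∃ i, B x = c i then B x + g h.choose x else B x
  have F1 : ∀ x i, B x = c i → F x = c i + g i x := by
    intro x i h
    have hex : ∃ i, B x = c i := ⟨i, h⟩
    have : hex.choose = i := hc (hex.choose_spec.symm.trans h)
    simp only [F]
    rw [dif_pos hex, this, h]
  have F2 : ∀ x, (∀ i, B x ≠ c i) → F x = B x := by
    intro x h
    simp only [F]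
    rw [dif_neg (by push Not; exact h)]
  have Fcont : Continuous F := by
    apply continuous_of_uniform_approx_of_continuous
    intro u hu
    obtain ⟨ε, hε, hεu⟩ := Metric.mem_uniformity_dist.1 hu
    have fin := hfin (ε/2) (by linarith)
    refine ⟨fun x => B x + ∑ i ∈ fin.toFinset, g i x, Bcont.add
      (continuous_finsetSum _ fun i _ => gcont i), ?_⟩
    intro x
    apply hεu
    beta_reduce
    by_cases hx : ∃ i, B x = c i
    · obtain ⟨i, hi⟩ := hx
      have hz : ∀ j ≠ i, g j x = 0 := fun j hj => gzero j x (by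
        rw [hi]; exact fun h => hj (hc h).symm)
      rw [F1 x i hi, hi]
      by_cases him : i ∈ fin.toFinset
      · rw [Finset.sum_eq_single_of_mem i him (fun j _ hj => hz j hj), dist_self]
        exact hε
      · rw [Finset.sum_eq_zero (fun j hj => hz j (fun h => him (h ▸ hj)))]
        simp only [Finite.mem_toFinset, mem_setOf_eq, not_lt] at him
        obtain ⟨e1, e2⟩ := exc_mem (p i) (q i) ((x - X (c i)) / w i) (hp i) (hq i)
        have e3 := hcab i
        rw [Real.dist_eq, abs_lt]
        simp only [g, p, q] at *
        constructor <;> linarith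
    · push Not at hx
      rw [F2 x hx, Finset.sum_eq_zero (fun j _ => gzero j x (hx j))]
      simpa using hε
  have hc0 : ∀ i, 0 < c i := fun i => (ha i).trans_lt (hcab i).1
  have hc1 : ∀ i, c i < 1 := fun i => (hcab i).2.trans_le (hb i)
  -- the section
  let φ : ι → ℝ → ℝ := fun i u => X (c i) + w i * u
  have φmem : ∀ i u, u ∈ Ioc (0:ℝ) 1 → X (c i) < φ i u ∧ φ i u ≤ Y (c i) := by
    intro i u hu
    have := hw i
    rw [h5]
    simp only [φ]
    constructor <;> nlinarith [hu.1, hu.2]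
  have φB : ∀ i u, u ∈ Ioc (0:ℝ) 1 → B (φ i u) = c i := fun i u hu =>
    uniq _ _ (φmem i u hu).1.le (φmem i u hu).2
  have φF : ∀ i u, u ∈ Ioc (0:ℝ) 1 → F (φ i u) = c i + exc (p i) (q i) u := by
    intro i u hu
    rw [F1 _ i (φB i u hu)]
    simp only [g, φ]
    congr 2
    have := (hw i).ne'
    field_simp
    ring
  have φinj : ∀ i j u v, u ∈ Ioc (0:ℝ) 1 → v ∈ Ioc (0:ℝ) 1 → φ i u = φ j v → i = j ∧ u = v := by
    intro i j u v hu hv h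
    have : i = j := hc (by rw [← φB i u hu, ← φB j v hv, h])
    subst this
    refine ⟨rfl, ?_⟩
    simp only [φ] at h
    exact mul_left_cancel₀ (hw i).ne' (by linarith)
  have φX : ∀ i u y, u ∈ Ioc (0:ℝ) 1 → φ i u ≠ X y := by
    intro i u y hu h
    have e1 : y = c i := by
      rw [← φB i u hu, h]
      exact (uniq _ _ le_rfl (h2 y)).symm
    have := (φmem i u hu).1
    rw [h, e1] at this
    exact lt_irrefl _ this
  let φ1 : ℝ → ι → ℝ := fun y i => φ i (U1 (p i) (q i) (y - c i))
  let φ2 : ℝ → ι → ℝ := fun y i => φ i (U2 (p i) (q i) (y - c i))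
  have s1 : ∀ y i, y ∈ Ico (a i) (b i) → y - c i ∈ Ico (-(q i)) (p i) := by
    rintro y i ⟨e1, e2⟩
    simp only [p, q]
    constructor <;> linarith
  have s2 : ∀ y i, y ∈ Ioc (a i) (b i) → y - c i ∈ Ioc (-(q i)) (p i) := by
    rintro y i ⟨e1, e2⟩
    simp only [p, q]
    constructor <;> linarith
  have secF : ∀ y, {x | F x = y} = {X y} ∪ (φ2 y '' {i | y ∈ Ioc (a i) (b i)}) ∪
      (φ1 y '' {i | y ∈ Ico (a i) (b i)}) := by
    intro y
    ext x
    constructor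
    · intro hx
      change F x = y at hx
      by_cases h : ∃ i, B x = c i
      · obtain ⟨i, hi⟩ := h
        have hx1 := (hB x).1
        have hx2 := (hB x).2
        rw [hi] at hx1 hx2
        rcases hx1.eq_or_lt with h0 | h0
        · left; left
          rw [F1 x i hi] at hx
          simp only [g] at hx
          rw [← h0, exc_left _ _ _ (by simp)] at hx
          rw [mem_singleton_iff, ← h0, ← hx, add_zero]
        · set u := (x - X (c i)) / w i with hu
          have hxu : x = φ i u := by
            simp only [φ, hu]
            have := (hw i).ne'
            field_simp
            ring
          have hu01 : u ∈ Ioc (0:ℝ) 1 := by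
            constructor
            · exact div_pos (by linarith) (hw i)
            · rw [hu, div_le_one (hw i)]
              rw [h5] at hx2
              linarith
          rw [hxu, φF i u hu01] at hx
          have hv : exc (p i) (q i) u = y - c i := by linarith
          rcases U_surj (p i) (q i) u (hp i) (hq i) hu01 with ⟨m, e⟩ | ⟨m, e⟩
          · right
            rw [hv] at m e
            refine ⟨i, ?_, ?_⟩
            · simp only [p, q, mem_Ico] at m
              exact ⟨by linarith [m.1], by linarith [m.2]⟩
            · simp only [φ1]; rw [← e, ← hxu]
          · left; right
            rw [hv] at m e
            refine ⟨i, ?_, ?_⟩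
            · simp only [p, q, mem_Ioc] at m
              exact ⟨by linarith [m.1], by linarith [m.2]⟩
            · simp only [φ2]; rw [← e, ← hxu]
      · push Not at h
        left; left
        rw [F2 x h] at hx
        have e := hB x
        rw [hx] at e
        rw [h6 y (fun i hi => h i (by rw [hx, hi]))] at e
        exact le_antisymm e.2 e.1
    · rintro ((hx | ⟨i, hi, rfl⟩) | ⟨i, hi, rfl⟩)
      · rw [mem_singleton_iff] at hx
        subst hx
        have hBy : B (X y) = y := uniq _ _ le_rfl (h2 y)
        change F (X y) = y
        by_cases h : ∃ i, B (X y) = c i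
        · obtain ⟨i, hi⟩ := h
          rw [F1 _ i hi]
          rw [hBy] at hi
          simp only [g]
          rw [hi, exc_left _ _ _ (by simp), add_zero]
        · push Not at h
          rw [F2 _ h, hBy]
      · obtain ⟨m, e⟩ := U2_spec (p i) (q i) _ (hp i) (hq i) (s2 y i hi)
        change F (φ i _) = y
        rw [φF i _ m, e]; ring
      · obtain ⟨m, e⟩ := U1_spec (p i) (q i) _ (hp i) (hq i) (s1 y i hi)
        change F (φ i _) = y
        rw [φF i _ m, e]; ring
  have cardF : ∀ y, {x | F x = y}.encard =
      1 + {i | y ∈ Ioc (a i) (b i)}.encard + {i | y ∈ Ico (a i) (b i)}.encard := by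
    intro y
    have m1 := fun i (hi : y ∈ Ico (a i) (b i)) => (U1_spec (p i) (q i) _ (hp i) (hq i) (s1 y i hi)).1
    have m2 := fun i (hi : y ∈ Ioc (a i) (b i)) => (U2_spec (p i) (q i) _ (hp i) (hq i) (s2 y i hi)).1
    rw [secF, encard_union_eq, encard_union_eq, encard_singleton, InjOn.encard_image,
      InjOn.encard_image]
    · intro i hi j hj h
      exact (φinj i j _ _ (m1 i hi) (m1 j hj) h).1
    · intro i hi j hj h
      exact (φinj i j _ _ (m2 i hi) (m2 j hj) h).1
    · rw [disjoint_singleton_left]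
      rintro ⟨i, hi, h⟩
      exact φX i _ y (m2 i hi) h
    · rw [disjoint_left]
      rintro x (hx | ⟨i, hi, rfl⟩) ⟨j, hj, h⟩
      · rw [mem_singleton_iff] at hx
        exact φX j _ y (m1 j hj) (h.trans hx)
      · obtain ⟨rfl, h'⟩ := φinj j i _ _ (m1 j hj) (m2 i hi) h
        exact U_ne _ _ _ (hp j) (hq j) (s1 y j hj) (s2 y j hi) h'
  have cntF : ∀ y, {x | F x = y}.Countable := by
    intro y
    rw [secF]
    exact ((countable_singleton _).union ((to_countable _).image _)).union ((to_countable _).image _)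
  have Bneg : ∀ x, x < 0 → F x < 0 := by
    intro x hx
    have : B x < 0 := by
      by_contra h
      push Not at h
      linarith [h1 (B x), (hB x).1]
    rw [F2 x (fun i h => by linarith [hc0 i])]
    exact this
  have Bbig : ∀ x, 1 + S < x → 1 < F x := by
    intro x hx
    have : 1 < B x := by
      by_contra h
      push Not at h
      linarith [h3 (B x), (hB x).2]
    rw [F2 x (fun i h => by linarith [hc1 i])]
    exact this
  have B0 : B 0 = 0 := by
    have := h8 0 hc0
    exact uniq _ _ this.le (by have := h2 0; linarith)
  have B1 : B (1 + S) = 1 := by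
    have := h7 1 hc1
    exact uniq _ _ this.le (by rw [← this]; exact h2 1)
  have F0 : F 0 = 0 := by
    rw [F2 0 (fun i h => by linarith [hc0 i]), B0]
  have FT : F (1 + S) = 1 := by
    rw [F2 _ (fun i h => by linarith [hc1 i]), B1]
  have T0 : 0 < 1 + S := by linarith
  refine ⟨fun t => F ((1 + S) * t), (Fcont.comp (by fun_prop)).continuousOn, ?_, by simpa using F0,
    by simpa using FT, ?_⟩
  · rintro t ⟨t0, t1⟩
    have b0 := Bmono 0 ((1+S) * t) (by positivity)
    have b1 := Bmono ((1+S) * t) (1+S) (by nlinarith)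
    rw [B0] at b0
    rw [B1] at b1
    change F ((1+S) * t) ∈ _
    by_cases h : ∃ i, B ((1+S) * t) = c i
    · obtain ⟨i, hi⟩ := h
      rw [F1 _ i hi]
      obtain ⟨e1, e2⟩ := exc_mem (p i) (q i) (((1+S) * t - X (c i)) / w i) (hp i) (hq i)
      have := ha i
      have := hb i
      simp only [g, p, q] at *
      constructor <;> linarith
    · push Not at h
      rw [F2 _ h]
      exact ⟨b0, b1⟩
  · intro y hy
    have hsec : {x | F x = y} = (fun t => (1 + S) * t) '' (Sec (fun t => F ((1 + S) * t)) y) := by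
      ext x
      constructor
      · intro hx
        change F x = y at hx
        have x0 : 0 ≤ x := by
          by_contra h
          push Not at h
          linarith [Bneg x h, hy.1]
        have x1 : x ≤ 1 + S := by
          by_contra h
          push Not at h
          linarith [Bbig x h, hy.2]
        have e : (1 + S) * (x / (1 + S)) = x := by field_simp
        exact ⟨x / (1 + S), ⟨⟨by positivity, (div_le_one T0).2 x1⟩, by simpa only [e] using hx⟩, e⟩
      · rintro ⟨t, ⟨-, ht⟩, rfl⟩
        exact ht
    have inj : Function.Injective (fun t : ℝ => (1 + S) * t) := mul_right_injective₀ T0.ne'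
    constructor
    · have := cntF y
      rw [hsec] at this
      exact (countable_of_injective_of_countable_image inj.injOn this)
    · rw [← cardF y, hsec, inj.encard_image]

lemma split_count (m l r : ℕ∞) (h1 : 1 ≤ m) (h : m ≤ 1 + l + r) :
    ∃ α β : ℕ∞, α ≤ l ∧ β ≤ r ∧ 1 + α + β = m ∧
      ∀ k : ℕ, (k:ℕ∞) < l → (k:ℕ∞) < r → 2 * (k:ℕ∞) + 3 ≤ m → (k:ℕ∞) < α ∧ (k:ℕ∞) < β := by
  by_cases hm : m = ⊤
  · subst hm
    exact ⟨l, r, le_rfl, le_rfl, top_le_iff.1 h, fun k a b _ => ⟨a, b⟩⟩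
  lift m to ℕ using hm
  obtain ⟨l', hl', hl1, hl2⟩ : ∃ l' : ℕ, (l':ℕ∞) ≤ l ∧ (∀ k : ℕ, k < m → (k:ℕ∞) < l → k < l') ∧
      (l = l' ∨ m ≤ l') := by
    by_cases h : l = ⊤
    · exact ⟨m, by simp [h], fun k hk _ => hk, Or.inr le_rfl⟩
    · lift l to ℕ using h
      exact ⟨l, le_rfl, fun k _ hk => by exact_mod_cast hk, Or.inl rfl⟩
  obtain ⟨r', hr', hr1, hr2⟩ : ∃ r' : ℕ, (r':ℕ∞) ≤ r ∧ (∀ k : ℕ, k < m → (k:ℕ∞) < r → k < r') ∧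
      (r = r' ∨ m ≤ r') := by
    by_cases h : r = ⊤
    · exact ⟨m, by simp [h], fun k hk _ => hk, Or.inr le_rfl⟩
    · lift r to ℕ using h
      exact ⟨r, le_rfl, fun k _ hk => by exact_mod_cast hk, Or.inl rfl⟩
  have h1' : 1 ≤ m := by exact_mod_cast h1
  have h' : m ≤ 1 + l' + r' := by
    rcases hl2 with e | e
    · rcases hr2 with e' | e'
      · subst e e'; exact_mod_cast h
      · omega
    · omega
  obtain ⟨α, β, a1, a2, a3, a4⟩ : ∃ α β : ℕ, α ≤ l' ∧ β ≤ r' ∧ 1 + α + β = m ∧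
      ∀ k : ℕ, k < l' → k < r' → 2 * k + 3 ≤ m → k < α ∧ k < β := by
    refine ⟨max (min l' ((m-1)/2)) (m-1-r'), m - 1 - max (min l' ((m-1)/2)) (m-1-r'), ?_, ?_, ?_, ?_⟩
    · omega
    · omega
    · omega
    · intro k _ _ _
      constructor <;> omega
  refine ⟨α, β, le_trans (by exact_mod_cast a1) hl', le_trans (by exact_mod_cast a2) hr',
    by exact_mod_cast a3, ?_⟩
  intro k k1 k2 k3
  have k3' : 2 * k + 3 ≤ m := by exact_mod_cast k3
  have := a4 k (hl1 k (by omega) k1) (hr1 k (by omega) k2) k3'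
  exact ⟨by exact_mod_cast this.1, by exact_mod_cast this.2⟩

lemma enat_of_antitone (L : ℕ → Prop) (h : ∀ m n, m ≤ n → L n → L m) :
    ∃ n : ℕ∞, ∀ k : ℕ, L k ↔ (k:ℕ∞) < n := by
  classical
  by_cases hex : ∃ k, ¬ L k
  · refine ⟨(Nat.find hex : ℕ), fun k => ?_⟩
    rw [Nat.cast_lt]
    constructor
    · intro hk
      by_contra h'
      push Not at h'
      exact Nat.find_spec hex (h _ _ h' hk)
    · intro hk
      by_contra h'
      exact Nat.find_min hex hk h'
  · push Not at hex
    exact ⟨⊤, fun k => by simp [hex k]⟩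

lemma encard_lt (n : ℕ∞) : {k : ℕ | (k:ℕ∞) < n}.encard = n := by
  by_cases h : n = ⊤
  · subst h
    simp
  · lift n to ℕ using h
    have : {k : ℕ | (k:ℕ∞) < n} = ((Finset.range n : Finset ℕ) : Set ℕ) := by
      ext k; simp
    rw [this, encard_coe_eq_coe_finsetCard, Finset.card_range]

def LL (g : ℝ → ℕ∞) (k : ℕ) (y : ℝ) : Prop := ∃ ε > 0, ∀ z ∈ Ioo (y - ε) y, 2 * (k:ℕ∞) + 3 ≤ g z
def RR (g : ℝ → ℕ∞) (k : ℕ) (y : ℝ) : Prop := ∃ ε > 0, ∀ z ∈ Ioo y (y + ε), 2 * (k:ℕ∞) + 3 ≤ g z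

lemma lt_odd_iff (x : ℕ∞) (k : ℕ) (h : ¬ 2 * (k:ℕ∞) + 3 ≤ x) : ∃ j : ℕ, x = j ∧ j ≤ 2 * k + 2 := by
  push Not at h
  have : x ≠ ⊤ := ne_top_of_lt h
  lift x to ℕ using this
  have : x < 2 * k + 3 := by exact_mod_cast h
  exact ⟨x, rfl, by omega⟩

lemma key_ineq (f g : ℝ → ℕ∞) (hf : Preindicatrix f) (hg : ∀ y ∈ Icc (0:ℝ) 1, g y = f y)
    (hg' : ∀ y, y ∉ Icc (0:ℝ) 1 → g y = 1) (y : ℝ) (l r : ℕ∞)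
    (hl : ∀ k : ℕ, LL g k y ↔ (k:ℕ∞) < l) (hr : ∀ k : ℕ, RR g k y ↔ (k:ℕ∞) < r) :
    g y ≤ 1 + l + r := by
  by_cases hy : y ∉ Icc (0:ℝ) 1
  · rw [hg' y hy, add_assoc]; exact le_self_add
  rw [not_not] at hy
  by_contra hlt
  push Not at hlt
  have hlr : 1 + l + r ≠ ⊤ := ne_top_of_lt hlt
  have hltop : l ≠ ⊤ := by rintro rfl; simp at hlr
  have hrtop : r ≠ ⊤ := by rintro rfl; simp at hlr
  lift l to ℕ using hltop
  lift r to ℕ using hrtop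
  have nl : ∀ ε > 0, ∃ z ∈ Ioo (y - ε) y, ∃ j : ℕ, g z = j ∧ j ≤ 2 * l + 2 := by
    have := (hl l).not.2 (lt_irrefl _)
    unfold LL at this
    push Not at this
    intro ε hε
    obtain ⟨z, hz, h⟩ := this ε hε
    exact ⟨z, hz, lt_odd_iff _ _ (not_le.2 h)⟩
  have nr : ∀ ε > 0, ∃ z ∈ Ioo y (y + ε), ∃ j : ℕ, g z = j ∧ j ≤ 2 * r + 2 := by
    have := (hr r).not.2 (lt_irrefl _)
    unfold RR at this
    push Not at this
    intro ε hε
    obtain ⟨z, hz, h⟩ := this ε hε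
    exact ⟨z, hz, lt_odd_iff _ _ (not_le.2 h)⟩
  rw [hg y hy] at hlt
  obtain ⟨-, ⟨c1, c2, c3⟩, cs⟩ := hf
  rcases hy.1.eq_or_lt with h0 | h0
  · subst h0
    by_cases ht : f 0 = ⊤
    · obtain ⟨ε, hε, -, h, -⟩ := cs 0 hy ht (2 * r + 4)
      obtain ⟨z, hz, j, hj, hj'⟩ := nr (min ε 1) (lt_min hε one_pos)
      have i1 := min_le_left ε 1
      have i2 := min_le_right ε 1
      have zm : z ∈ Icc (0:ℝ) 1 := ⟨hz.1.le, by linarith [hz.2]⟩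
      have := h rfl z zm hz.1 (by linarith [hz.2])
      rw [← hg z zm, hj] at this
      have : 2 * r + 4 ≤ 1 + j := by exact_mod_cast this
      omega
    · obtain ⟨ε, hε, h⟩ := c2 ht
      obtain ⟨z, hz, j, hj, hj'⟩ := nr (min ε 1) (lt_min hε one_pos)
      have i1 := min_le_left ε 1
      have i2 := min_le_right ε 1
      have zm : z ∈ Icc (0:ℝ) 1 := ⟨hz.1.le, by linarith [hz.2]⟩
      have := h z zm hz.1 (by linarith [hz.2])
      rw [← hg z zm, hj] at this
      generalize f 0 = m at *
      lift m to ℕ using ht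
      have : 2 * m ≤ 1 + j := by exact_mod_cast this
      have : 1 + l + r < m := by exact_mod_cast hlt
      omega
  rcases hy.2.eq_or_lt with h1 | h1
  · subst h1
    by_cases ht : f 1 = ⊤
    · obtain ⟨ε, hε, -, -, h⟩ := cs 1 hy ht (2 * l + 4)
      obtain ⟨z, hz, j, hj, hj'⟩ := nl (min ε 1) (lt_min hε one_pos)
      have i1 := min_le_left ε 1
      have i2 := min_le_right ε 1
      have zm : z ∈ Icc (0:ℝ) 1 := ⟨by linarith [hz.1], hz.2.le⟩
      have := h rfl z zm (by linarith [hz.1]) hz.2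
      rw [← hg z zm, hj] at this
      have : 2 * l + 4 ≤ j + 1 := by exact_mod_cast this
      omega
    · obtain ⟨ε, hε, h⟩ := c3 ht
      obtain ⟨z, hz, j, hj, hj'⟩ := nl (min ε 1) (lt_min hε one_pos)
      have i1 := min_le_left ε 1
      have i2 := min_le_right ε 1
      have zm : z ∈ Icc (0:ℝ) 1 := ⟨by linarith [hz.1], hz.2.le⟩
      have := h z zm (by linarith [hz.1]) hz.2
      rw [← hg z zm, hj] at this
      generalize f 1 = m at *
      lift m to ℕ using ht
      have : 2 * m ≤ j + 1 := by exact_mod_cast this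
      have : 1 + l + r < m := by exact_mod_cast hlt
      omega
  have pick : ∀ ε > 0, ∃ z₁ ∈ Icc (0:ℝ) 1, ∃ z₂ ∈ Icc (0:ℝ) 1, y - ε < z₁ ∧ z₁ < y ∧ y < z₂ ∧
      z₂ < y + ε ∧ ∃ i j : ℕ, f z₁ = i ∧ f z₂ = j ∧ i ≤ 2 * l + 2 ∧ j ≤ 2 * r + 2 := by
    intro ε hε
    obtain ⟨z, hz, i, hi, hi'⟩ := nl (min ε y) (lt_min hε h0)
    obtain ⟨z', hz', j, hj, hj'⟩ := nr (min ε (1-y)) (lt_min hε (by linarith))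
    have i1 := min_le_left ε y
    have i2 := min_le_right ε y
    have i3 := min_le_left ε (1-y)
    have i4 := min_le_right ε (1-y)
    have zm : z ∈ Icc (0:ℝ) 1 := ⟨by linarith [hz.1], by linarith [hz.2]⟩
    have zm' : z' ∈ Icc (0:ℝ) 1 := ⟨by linarith [hz'.1], by linarith [hz'.2]⟩
    exact ⟨z, zm, z', zm', by linarith [hz.1], hz.2, hz'.1, by linarith [hz'.2], i, j,
      by rw [← hg z zm, hi], by rw [← hg z' zm', hj], hi', hj'⟩
  by_cases ht : f y = ⊤
  · obtain ⟨ε, hε, h, -, -⟩ := cs y hy ht (2 * l + 2 * r + 5)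
    obtain ⟨z₁, m1, z₂, m2, a1, a2, a3, a4, i, j, hi, hj, hi', hj'⟩ := pick ε hε
    have := h z₁ m1 z₂ m2 a1 a2 a3 a4
    rw [hi, hj] at this
    have : 2 * l + 2 * r + 5 ≤ i + j := by exact_mod_cast this
    omega
  · obtain ⟨ε, hε, h⟩ := c1 y ⟨h0, h1⟩ ht
    obtain ⟨z₁, m1, z₂, m2, a1, a2, a3, a4, i, j, hi, hj, hi', hj'⟩ := pick ε hε
    have := h z₁ m1 z₂ m2 a1 a2 a3 a4
    rw [hi, hj] at this
    generalize f y = m at *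
    lift m to ℕ using ht
    obtain ⟨b1, b2⟩ := this
    have b1' : 2 * m ≤ i + j := by exact_mod_cast b1
    have : 1 + l + r < m := by exact_mod_cast hlt
    obtain ⟨⟨k, hk, hk'⟩, -⟩ := b2 (by
      have : i + j = 2 * m := by omega
      exact_mod_cast this)
    have : i = k := by exact_mod_cast hk
    obtain ⟨t, ht⟩ := hk'
    omega

theorem preindicatrix_realization (f : ℝ → ℕ∞) (hf : Preindicatrix f) :
    ∃ F : ℝ → ℝ, ContinuousOn F (Set.Icc 0 1) ∧
      Set.MapsTo F (Set.Icc 0 1) (Set.Icc 0 1) ∧ F 0 = 0 ∧ F 1 = 1 ∧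
      ∀ y ∈ Set.Icc (0:ℝ) 1, (Sec F y).Countable ∧ (Sec F y).encard = f y := by
  classical
  obtain ⟨g, hg, hg'⟩ : ∃ g : ℝ → ℕ∞, (∀ y ∈ Icc (0:ℝ) 1, g y = f y) ∧
      ∀ y, y ∉ Icc (0:ℝ) 1 → g y = 1 :=
    ⟨fun y => if y ∈ Icc (0:ℝ) 1 then f y else 1, fun y hy => if_pos hy, fun y hy => if_neg hy⟩
  have g1 : ∀ y, 1 ≤ g y := by
    intro y
    by_cases hy : y ∈ Icc (0:ℝ) 1
    · rw [hg y hy]; exact hf.1 y hy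
    · rw [hg' y hy]
  have mono : ∀ m n : ℕ, m ≤ n → 2 * (m:ℕ∞) + 3 ≤ 2 * (n:ℕ∞) + 3 := by
    intro m n h
    have : 2 * m + 3 ≤ 2 * n + 3 := by omega
    exact_mod_cast this
  have exl : ∀ y, ∃ l : ℕ∞, ∀ k : ℕ, LL g k y ↔ (k:ℕ∞) < l := fun y =>
    enat_of_antitone _ (fun m n h ⟨ε, hε, h'⟩ => ⟨ε, hε, fun z hz => (mono m n h).trans (h' z hz)⟩)
  have exr : ∀ y, ∃ r : ℕ∞, ∀ k : ℕ, RR g k y ↔ (k:ℕ∞) < r := fun y =>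
    enat_of_antitone _ (fun m n h ⟨ε, hε, h'⟩ => ⟨ε, hε, fun z hz => (mono m n h).trans (h' z hz)⟩)
  choose l hl using exl
  choose r hr using exr
  have ex := fun y => split_count (g y) (l y) (r y) (g1 y)
    (key_ineq f g hf hg hg' y (l y) (r y) (hl y) (hr y))
  choose α β hα hβ hsum hbal using ex
  have inner : ∀ (k : ℕ) s t, (∀ z ∈ Ioo s t, 2 * (k:ℕ∞) + 3 ≤ g z) →
      ∀ z ∈ Ioo s t, (k:ℕ∞) < α z ∧ (k:ℕ∞) < β z := by
    intro k s t h z hz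
    refine hbal z k ((hl z k).1 ⟨z - s, by linarith [hz.1], ?_⟩)
      ((hr z k).1 ⟨t - z, by linarith [hz.2], ?_⟩) (h z hz)
    · rintro x ⟨x1, x2⟩
      exact h x ⟨by linarith, by linarith [hz.2]⟩
    · rintro x ⟨x1, x2⟩
      exact h x ⟨by linarith [hz.1], by linarith⟩
  have big : ∀ (k : ℕ) z, 2 * (k:ℕ∞) + 3 ≤ g z → z ∈ Icc (0:ℝ) 1 := by
    intro k z h
    by_contra hz
    rw [hg' z hz] at h
    have : 2 * k + 3 ≤ 1 := by exact_mod_cast h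
    omega
  have hPL : ∀ (k : ℕ) y, (k:ℕ∞) < α y → LL g k y := fun k y h => (hl y k).2 (h.trans_le (hα y))
  have hQR : ∀ (k : ℕ) y, (k:ℕ∞) < β y → RR g k y := fun k y h => (hr y k).2 (h.trans_le (hβ y))
  have ch := fun k : ℕ => chop {y | (k:ℕ∞) < α y} {y | (k:ℕ∞) < β y} (1 / (k + 1)) (by positivity)
    (fun y hy => by
      obtain ⟨ε, hε, h⟩ := hPL k y hy
      exact ⟨ε, hε, inner k _ _ h⟩)
    (fun y hy => by
      obtain ⟨ε, hε, h⟩ := hQR k y hy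
      exact ⟨ε, hε, inner k _ _ h⟩)
  choose 𝓕 f1 f2 f3 f4 using ch
  have cnt : ∀ k, Countable (𝓕 k) := by
    intro k
    refine Set.PairwiseDisjoint.countable_of_isOpen (s := fun p : ℝ × ℝ => Ioo p.1 p.2) ?_
      (fun _ _ => isOpen_Ioo) (fun p hp => nonempty_Ioo.2 (f1 k p hp).1)
    intro p hp q hq hne
    refine disjoint_left.2 (fun z h1 h2 => hne (f4 k p hp q hq z h1 h2))
  let a : (Σ k, 𝓕 k) → ℝ := fun i => i.2.1.1
  let b : (Σ k, 𝓕 k) → ℝ := fun i => i.2.1.2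
  have hab : ∀ i, a i < b i := fun i => (f1 i.1 _ i.2.2).1
  have ha : ∀ i, 0 ≤ a i := by
    intro i
    obtain ⟨ε, hε, h⟩ := hQR i.1 (a i) ((f1 i.1 _ i.2.2).2.2.2 ⟨le_rfl, hab i⟩)
    by_contra hneg
    push Not at hneg
    obtain ⟨z, z1, z2⟩ := exists_between (lt_min hneg (show a i < a i + ε by linarith))
    have := (big _ z (h z ⟨z1, z2.trans_le (min_le_right _ _)⟩)).1
    linarith [z2.trans_le (min_le_left _ _)]
  have hb : ∀ i, b i ≤ 1 := by
    intro i
    obtain ⟨ε, hε, h⟩ := hPL i.1 (b i) ((f1 i.1 _ i.2.2).2.2.1 ⟨hab i, le_rfl⟩)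
    by_contra hneg
    push Not at hneg
    obtain ⟨z, z1, z2⟩ := exists_between (max_lt hneg (show b i - ε < b i by linarith))
    have := (big _ z (h z ⟨(le_max_right _ _).trans_lt z1, z2⟩)).2
    linarith [(le_max_left _ _).trans_lt z1]
  have hfin : ∀ ε > 0, {i | ε < b i - a i}.Finite := by
    intro ε hε
    obtain ⟨N, hN⟩ := exists_nat_one_div_lt hε
    refine Set.Finite.of_injOn (f := fun i => (i.1, ⌊a i / ε⌋))
      (t := Iic N ×ˢ Icc (0:ℤ) ⌊1/ε⌋) ?_ ?_ ((finite_Iic N).prod (finite_Icc _ _))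
    · intro i hi
      refine ⟨?_, ?_, ?_⟩
      · by_contra hk
        simp only [mem_Iic, not_le] at hk
        have e1 : b i - a i ≤ 1 / (i.1 + 1) := (f1 i.1 _ i.2.2).2.1
        have e2 : (1:ℝ) / (i.1 + 1) ≤ 1 / (N + 1) := by
          apply one_div_le_one_div_of_le (by positivity)
          have : (N:ℝ) ≤ i.1 := by exact_mod_cast hk.le
          linarith
        have : ε < b i - a i := hi
        linarith
      · exact Int.floor_nonneg.2 (div_nonneg (ha i) hε.le)
      · apply Int.floor_le_floor
        apply div_le_div_of_nonneg_right _ hε.le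
        linarith [hab i, hb i]
    · rintro ⟨k, p, hp⟩ hi ⟨k', q, hq⟩ hj hij
      simp only [Prod.mk.injEq] at hij
      obtain ⟨rfl, hfl⟩ := hij
      simp only [a, b, mem_setOf_eq] at hi hj hfl
      have habs := Int.abs_sub_lt_one_of_floor_eq_floor hfl
      rw [← sub_div, abs_div, abs_of_pos hε, div_lt_one hε, abs_lt] at habs
      have : p = q := by
        have hm : max p.1 q.1 < min p.2 q.2 := by
          apply max_lt <;> apply lt_min <;> linarith
        obtain ⟨z, z1, z2⟩ := exists_between hm
        exact f4 k p hp q hq z ⟨(le_max_left _ _).trans_lt z1, z2.trans_le (min_le_left _ _)⟩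
          ⟨(le_max_right _ _).trans_lt z1, z2.trans_le (min_le_right _ _)⟩
      subst this
      rfl
  obtain ⟨F, F1, F2, F3, F4, F5⟩ := realize a b hab ha hb hfin
  refine ⟨F, F1, F2, F3, F4, fun y hy => ⟨(F5 y hy).1, ?_⟩⟩
  have eα : {i | y ∈ Ioc (a i) (b i)}.encard = α y := by
    rw [← encard_lt (α y), ← InjOn.encard_image (f := Sigma.fst)]
    · congr 1
      ext k
      constructor
      · rintro ⟨i, hi, rfl⟩
        exact (f1 i.1 _ i.2.2).2.2.1 hi
      · intro hk
        obtain ⟨p, hp, hyp⟩ := f2 k y hk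
        exact ⟨⟨k, p, hp⟩, hyp, rfl⟩
    · rintro ⟨k, p, hp⟩ hi ⟨k', q, hq⟩ hj hij
      change k = k' at hij
      subst hij
      simp only [a, b, mem_setOf_eq, mem_Ioc] at hi hj
      have hm : max p.1 q.1 < min p.2 q.2 := by
        apply max_lt <;> apply lt_min <;> linarith
      obtain ⟨z, z1, z2⟩ := exists_between hm
      have : p = q := f4 k p hp q hq z
        ⟨(le_max_left _ _).trans_lt z1, z2.trans_le (min_le_left _ _)⟩
        ⟨(le_max_right _ _).trans_lt z1, z2.trans_le (min_le_right _ _)⟩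
      subst this
      rfl
  have eβ : {i | y ∈ Ico (a i) (b i)}.encard = β y := by
    rw [← encard_lt (β y), ← InjOn.encard_image (f := Sigma.fst)]
    · congr 1
      ext k
      constructor
      · rintro ⟨i, hi, rfl⟩
        exact (f1 i.1 _ i.2.2).2.2.2 hi
      · intro hk
        obtain ⟨p, hp, hyp⟩ := f3 k y hk
        exact ⟨⟨k, p, hp⟩, hyp, rfl⟩
    · rintro ⟨k, p, hp⟩ hi ⟨k', q, hq⟩ hj hij
      change k = k' at hij
      subst hij
      simp only [a, b, mem_setOf_eq, mem_Ico] at hi hj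
      have hm : max p.1 q.1 < min p.2 q.2 := by
        apply max_lt <;> apply lt_min <;> linarith
      obtain ⟨z, z1, z2⟩ := exists_between hm
      have : p = q := f4 k p hp q hq z
        ⟨(le_max_left _ _).trans_lt z1, z2.trans_le (min_le_left _ _)⟩
        ⟨(le_max_right _ _).trans_lt z1, z2.trans_le (min_le_right _ _)⟩
      subst this
      rfl
  rw [(F5 y hy).2, eα, eβ, hsum y, hg y hy]
end
end

section
/- Let f : [0,1] → ℕ∞ with f(y) ≥ 1 for all y. There exists a Darboux function F : [0,1] → [0,1] with F(0) = 0 and F(1) = 1 such that every section F⁻¹(y) is countable and the extended natural cardinality of F⁻¹(y) equals f(y) for every y ∈ [0,1], if and only if f satisfies Condition (1) and satisfies Condition (**) at every y with f(y) = ∞. -/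
open Set

noncomputable section

/-- `F` has the intermediate value (Darboux) property on `[0,1]`. -/
def DarbouxFun (F : ℝ → ℝ) : Prop :=
  ∀ a b : ℝ, a ∈ Set.Icc (0:ℝ) 1 → b ∈ Set.Icc (0:ℝ) 1 → a ≤ b →
    ∀ t ∈ Set.uIcc (F a) (F b), ∃ x ∈ Set.Icc a b, F x = t


lemma half_tile (m d : ℝ) (h : m < d) (P : Prop) : ∃ T : Set (ℝ × ℝ),
    (∀ p ∈ T, m ≤ p.1 ∧ p.1 < p.2 ∧ p.2 ≤ d) ∧
    (∀ p ∈ T, ∀ q ∈ T, ∀ z, z ∈ Ioo p.1 p.2 → z ∈ Ioo q.1 q.2 → p = q) ∧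
    (∀ y ∈ Ioo m d, ∃ p ∈ T, y ∈ Ioc p.1 p.2) ∧
    (∀ y ∈ Ico m d, ∃ p ∈ T, y ∈ Ico p.1 p.2) ∧
    (P → ∃ p ∈ T, p.2 = d) ∧ (¬ P → ∀ p ∈ T, p.2 < d) := by
  by_cases hP : P
  · refine ⟨{(m, d)}, ?_, ?_, ?_, ?_, ?_, ?_⟩
    · rintro p rfl; exact ⟨le_rfl, h, le_rfl⟩
    · rintro p rfl q rfl _ _ _; rfl
    · intro y hy; exact ⟨_, rfl, hy.1, hy.2.le⟩
    · intro y hy; exact ⟨_, rfl, hy⟩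
    · intro _; exact ⟨_, rfl, rfl⟩
    · intro h; exact absurd hP h
  · set u : ℕ → ℝ := fun n => d - (d - m) * (1/2)^n with hu
    have hmd : 0 < d - m := sub_pos.2 h
    have hmono : StrictMono u := by
      apply strictMono_nat_of_lt_succ
      intro n
      have : 0 < (d - m) * (1/2:ℝ)^n := by positivity
      simp only [hu, pow_succ]; linarith
    have hlt : ∀ n, u n < d := by
      intro n
      have : 0 < (d - m) * (1/2:ℝ)^n := by positivity
      simp only [hu]; linarith
    have h0 : u 0 = m := by simp [hu]
    have hex : ∀ y < d, ∃ n, y < u n := by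
      intro y hy
      obtain ⟨n, hn⟩ := exists_pow_lt_of_lt_one (div_pos (sub_pos.2 hy) hmd) (by norm_num : (1/2:ℝ) < 1)
      refine ⟨n, ?_⟩
      rw [lt_div_iff₀ hmd] at hn
      simp only [hu]; linarith
    classical
    refine ⟨range fun n => (u n, u (n+1)), ?_, ?_, ?_, ?_, ?_, ?_⟩
    · rintro _ ⟨n, rfl⟩
      exact ⟨h0 ▸ hmono.monotone (Nat.zero_le n), hmono (Nat.lt_succ_self n), (hlt _).le⟩
    · rintro _ ⟨n, rfl⟩ _ ⟨k, rfl⟩ z hz hz'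
      simp only [mem_Ioo] at hz hz'
      have h1 : n < k + 1 := hmono.lt_iff_lt.1 (hz.1.trans hz'.2)
      have h2 : k < n + 1 := hmono.lt_iff_lt.1 (hz'.1.trans hz.2)
      have : n = k := by omega
      rw [this]
    · intro y hy
      have hex' : ∃ n, y ≤ u n := (hex y hy.2).imp fun _ h => h.le
      have h1 := Nat.find_spec hex'
      have hne : Nat.find hex' ≠ 0 := by
        intro h; rw [h, h0] at h1; exact absurd hy.1 (not_lt.2 h1)
      obtain ⟨k, hk⟩ := Nat.exists_eq_succ_of_ne_zero hne
      refine ⟨_, ⟨k, rfl⟩, ?_, ?_⟩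
      · exact not_le.1 (Nat.find_min hex' (m := k) (by omega))
      · rw [hk] at h1; exact h1
    · intro y hy
      have hex' := hex y hy.2
      have h1 := Nat.find_spec hex'
      have hne : Nat.find hex' ≠ 0 := by
        intro h; rw [h, h0] at h1; exact absurd hy.1 (not_le.2 h1)
      obtain ⟨k, hk⟩ := Nat.exists_eq_succ_of_ne_zero hne
      refine ⟨_, ⟨k, rfl⟩, ?_, ?_⟩
      · exact not_lt.1 (Nat.find_min hex' (m := k) (by omega))
      · rw [hk] at h1; exact h1
    · intro h; exact absurd h hP
    · rintro _ _ ⟨n, rfl⟩; exact hlt _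

lemma half_tile' (c m : ℝ) (h : c < m) (P : Prop) : ∃ T : Set (ℝ × ℝ),
    (∀ p ∈ T, c ≤ p.1 ∧ p.1 < p.2 ∧ p.2 ≤ m) ∧
    (∀ p ∈ T, ∀ q ∈ T, ∀ z, z ∈ Ioo p.1 p.2 → z ∈ Ioo q.1 q.2 → p = q) ∧
    (∀ y ∈ Ioc c m, ∃ p ∈ T, y ∈ Ioc p.1 p.2) ∧
    (∀ y ∈ Ioo c m, ∃ p ∈ T, y ∈ Ico p.1 p.2) ∧
    (P → ∃ p ∈ T, p.1 = c) ∧ (¬ P → ∀ p ∈ T, c < p.1) := by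
  obtain ⟨T, h1, h2, h3, h4, h5, h6⟩ := half_tile (-m) (-c) (by linarith) P
  refine ⟨{p | (-p.2, -p.1) ∈ T}, ?_, ?_, ?_, ?_, ?_, ?_⟩
  · intro p hp
    have := h1 _ hp
    simp only at this
    refine ⟨?_, ?_, ?_⟩ <;> linarith [this.1, this.2.1, this.2.2]
  · intro p hp q hq z hz hz'
    have := h2 _ hp _ hq (-z) ⟨by simpa using hz.2, by simpa using hz.1⟩ ⟨by simpa using hz'.2, by simpa using hz'.1⟩
    simp only [Prod.mk.injEq, neg_inj] at this
    exact Prod.ext this.2 this.1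
  · intro y hy
    obtain ⟨p, hp, hyp⟩ := h4 (-y) ⟨by simpa using hy.2, by simpa using hy.1⟩
    exact ⟨(-p.2, -p.1), by simpa using hp, by simp only; linarith [hyp.2], by simp only; linarith [hyp.1]⟩
  · intro y hy
    obtain ⟨p, hp, hyp⟩ := h3 (-y) ⟨by simpa using hy.2, by simpa using hy.1⟩
    exact ⟨(-p.2, -p.1), by simpa using hp, by simp only; linarith [hyp.2], by simp only; linarith [hyp.1]⟩
  · intro hP
    obtain ⟨p, hp, hyp⟩ := h5 hP
    exact ⟨(-p.2, -p.1), by simpa using hp, by simp [hyp]⟩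
  · intro hP p hp
    have := h6 hP _ hp
    simpa using this

lemma full_tile (c d : ℝ) (h : c < d) (P Q : Prop) : ∃ T : Set (ℝ × ℝ),
    (∀ p ∈ T, c ≤ p.1 ∧ p.1 < p.2 ∧ p.2 ≤ d) ∧
    (∀ p ∈ T, ∀ q ∈ T, ∀ z, z ∈ Ioo p.1 p.2 → z ∈ Ioo q.1 q.2 → p = q) ∧
    (∀ y ∈ Ioo c d, ∃ p ∈ T, y ∈ Ioc p.1 p.2) ∧
    (∀ y ∈ Ioo c d, ∃ p ∈ T, y ∈ Ico p.1 p.2) ∧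
    (P → ∃ p ∈ T, p.2 = d) ∧ (¬ P → ∀ p ∈ T, p.2 < d) ∧
    (Q → ∃ p ∈ T, p.1 = c) ∧ (¬ Q → ∀ p ∈ T, c < p.1) := by
  obtain ⟨m, hcm, hmd⟩ := exists_between h
  obtain ⟨T, h1, h2, h3, h4, h5, h6⟩ := half_tile m d hmd P
  obtain ⟨S, g1, g2, g3, g4, g5, g6⟩ := half_tile' c m hcm Q
  refine ⟨S ∪ T, ?_, ?_, ?_, ?_, ?_, ?_, ?_, ?_⟩
  · rintro p (hp | hp)
    · have := g1 p hp; exact ⟨this.1, this.2.1, by linarith⟩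
    · have := h1 p hp; exact ⟨by linarith, this.2.1, this.2.2⟩
  · rintro p (hp | hp) q (hq | hq) z hz hz'
    · exact g2 p hp q hq z hz hz'
    · have := g1 p hp; have := h1 q hq; have := hz.2; have := hz'.1; exfalso; linarith
    · have := h1 p hp; have := g1 q hq; have := hz.1; have := hz'.2; exfalso; linarith
    · exact h2 p hp q hq z hz hz'
  · intro y hy
    rcases le_or_gt y m with hh | hh
    · obtain ⟨p, hp, h⟩ := g3 y ⟨hy.1, hh⟩; exact ⟨p, Or.inl hp, h⟩
    · obtain ⟨p, hp, h⟩ := h3 y ⟨hh, hy.2⟩; exact ⟨p, Or.inr hp, h⟩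
  · intro y hy
    rcases lt_or_ge y m with hh | hh
    · obtain ⟨p, hp, h⟩ := g4 y ⟨hy.1, hh⟩; exact ⟨p, Or.inl hp, h⟩
    · obtain ⟨p, hp, h⟩ := h4 y ⟨hh, hy.2⟩; exact ⟨p, Or.inr hp, h⟩
  · intro hP; obtain ⟨p, hp, h⟩ := h5 hP; exact ⟨p, Or.inr hp, h⟩
  · rintro hP p (hp | hp)
    · linarith [g1 p hp]
    · exact h6 hP p hp
  · intro hP; obtain ⟨p, hp, h⟩ := g5 hP; exact ⟨p, Or.inl hp, h⟩
  · rintro hP p (hp | hp)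
    · exact g6 hP p hp
    · linarith [h1 p hp]

lemma comp_exists (U : Set ℝ) (hU : IsOpen U) (hb : U ⊆ Icc 0 1) (x : ℝ) (hx : x ∈ U) :
    ∃ c d, c < x ∧ x < d ∧ Ioo c d ⊆ U ∧ c ∉ U ∧ d ∉ U := by
  have hC : IsClosed Uᶜ := hU.isClosed_compl
  have hne1 : (Uᶜ ∩ Iic x).Nonempty := by
    refine ⟨-1, fun h => ?_, ?_⟩
    · have := (hb h).1; linarith
    · have := (hb hx).1; simp only [mem_Iic]; linarith
  have hne2 : (Uᶜ ∩ Ici x).Nonempty := by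
    refine ⟨2, fun h => ?_, ?_⟩
    · have := (hb h).2; linarith
    · have := (hb hx).2; simp only [mem_Ici]; linarith
  have hb1 : BddAbove (Uᶜ ∩ Iic x) := ⟨x, fun _ h => h.2⟩
  have hb2 : BddBelow (Uᶜ ∩ Ici x) := ⟨x, fun _ h => h.2⟩
  have hc := (hC.inter isClosed_Iic).csSup_mem hne1 hb1
  have hd := (hC.inter isClosed_Ici).csInf_mem hne2 hb2
  refine ⟨_, _, lt_of_le_of_ne hc.2 ?_, lt_of_le_of_ne hd.2 ?_, ?_, hc.1, hd.1⟩
  · intro h; rw [h] at hc; exact hc.1 hx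
  · intro h; rw [← h] at hd; exact hd.1 hx
  · intro z hz
    by_contra hzU
    rcases le_total z x with h | h
    · exact absurd (le_csSup hb1 ⟨hzU, h⟩) (not_le.2 hz.1)
    · exact absurd (csInf_le hb2 ⟨hzU, h⟩) (not_le.2 hz.2)

lemma layer (L R : Set ℝ) (hLs : L ⊆ Icc 0 1) 
    (hL : ∀ y ∈ L, ∃ ε > 0, Ioo (y - ε) y ⊆ L ∩ R)
    (hR : ∀ y ∈ R, ∃ ε > 0, Ioo y (y + ε) ⊆ L ∩ R) :
    ∃ T : Set (ℝ × ℝ), T.Countable ∧ (∀ p ∈ T, 0 ≤ p.1 ∧ p.1 < p.2 ∧ p.2 ≤ 1) ∧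
    (∀ p ∈ T, ∀ q ∈ T, ∀ z, z ∈ Ioo p.1 p.2 → z ∈ Ioo q.1 q.2 → p = q) ∧
    (∀ y, y ∈ L ↔ ∃ p ∈ T, y ∈ Ioc p.1 p.2) ∧
    (∀ y, y ∈ R ↔ ∃ p ∈ T, y ∈ Ico p.1 p.2) := by
  set U := L ∩ R with hUdef
  have hb : U ⊆ Icc 0 1 := fun x hx => hLs hx.1
  have hU : IsOpen U := by
    rw [Metric.isOpen_iff]
    intro x hx
    obtain ⟨e1, he1, h1⟩ := hL x hx.1
    obtain ⟨e2, he2, h2⟩ := hR x hx.2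
    refine ⟨min e1 e2, lt_min he1 he2, fun z hz => ?_⟩
    rw [Real.ball_eq_Ioo] at hz
    have := min_le_left e1 e2
    have := min_le_right e1 e2
    rcases lt_trichotomy z x with h | h | h
    · exact h1 ⟨by linarith [hz.1], h⟩
    · rw [h]; exact hx
    · exact h2 ⟨h, by linarith [hz.2]⟩
  set C : Set (ℝ × ℝ) := {p | p.1 < p.2 ∧ Ioo p.1 p.2 ⊆ U ∧ p.1 ∉ U ∧ p.2 ∉ U} with hC
  have huniq : ∀ p ∈ C, ∀ q ∈ C, ∀ z, z ∈ Ioo p.1 p.2 → z ∈ Ioo q.1 q.2 → p = q := by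
    have key : ∀ p ∈ C, ∀ q ∈ C, ∀ z, z ∈ Ioo p.1 p.2 → z ∈ Ioo q.1 q.2 → q.1 ≤ p.1 ∧ p.2 ≤ q.2 := by
      intro p hp q hq z hz hz'
      constructor
      · by_contra! h; exact hq.2.2.1 (hp.2.1 ⟨h, by linarith [hz'.1, hz.2]⟩)
      · by_contra! h; exact hq.2.2.2 (hp.2.1 ⟨by linarith [hz'.2, hz.1], h⟩)
    intro p hp q hq z hz hz'
    have a := key p hp q hq z hz hz'
    have b := key q hq p hp z hz' hz
    exact Prod.ext (le_antisymm b.1 a.1) (le_antisymm a.2 b.2)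
  have htile : ∀ p : ℝ × ℝ, ∃ T : Set (ℝ × ℝ), p ∈ C → 
    (∀ q ∈ T, p.1 ≤ q.1 ∧ q.1 < q.2 ∧ q.2 ≤ p.2) ∧
    (∀ q ∈ T, ∀ q' ∈ T, ∀ z, z ∈ Ioo q.1 q.2 → z ∈ Ioo q'.1 q'.2 → q = q') ∧
    (∀ y ∈ Ioo p.1 p.2, ∃ q ∈ T, y ∈ Ioc q.1 q.2) ∧
    (∀ y ∈ Ioo p.1 p.2, ∃ q ∈ T, y ∈ Ico q.1 q.2) ∧
    (p.2 ∈ L → ∃ q ∈ T, q.2 = p.2) ∧ (p.2 ∉ L → ∀ q ∈ T, q.2 < p.2) ∧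
    (p.1 ∈ R → ∃ q ∈ T, q.1 = p.1) ∧ (p.1 ∉ R → ∀ q ∈ T, p.1 < q.1) := by
    intro p
    by_cases hp : p ∈ C
    · obtain ⟨T, hT⟩ := full_tile p.1 p.2 hp.1 (p.2 ∈ L) (p.1 ∈ R)
      exact ⟨T, fun _ => hT⟩
    · exact ⟨∅, fun h => absurd h hp⟩
  choose T hT using htile
  have hdisj : ∀ q ∈ ⋃ p ∈ C, T p, ∀ q' ∈ ⋃ p ∈ C, T p, ∀ z, z ∈ Ioo q.1 q.2 → z ∈ Ioo q'.1 q'.2 → q = q' := by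
    intro q hq q' hq' z hz hz'
    simp only [mem_iUnion] at hq hq'
    obtain ⟨p, hp, hq⟩ := hq
    obtain ⟨p', hp', hq'⟩ := hq'
    have a := (hT p hp).1 q hq
    have b := (hT p' hp').1 q' hq'
    have : p = p' := huniq p hp p' hp' z ⟨by linarith [hz.1], by linarith [hz.2]⟩ ⟨by linarith [hz'.1], by linarith [hz'.2]⟩
    subst this
    exact (hT p hp).2.1 q hq q' hq' z hz hz'
  refine ⟨⋃ p ∈ C, T p, ?_, ?_, hdisj, ?_, ?_⟩
  · have hlt : ∀ q ∈ ⋃ p ∈ C, T p, q.1 < q.2 := by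
      intro q hq
      simp only [mem_iUnion] at hq
      obtain ⟨p, hp, hq⟩ := hq
      exact ((hT p hp).1 q hq).2.1
    have : ((⋃ p ∈ C, T p).PairwiseDisjoint fun q => Ioo q.1 q.2) := by
      intro q hq q' hq' hne
      rw [Function.onFun, Set.disjoint_left]
      intro z hz hz'
      exact hne (hdisj q hq q' hq' z hz hz')
    exact this.countable_of_isOpen (fun _ _ => isOpen_Ioo) (fun q hq => nonempty_Ioo.2 (hlt q hq))
  · intro q hq
    simp only [mem_iUnion] at hq
    obtain ⟨p, hp, hq⟩ := hq
    have a := (hT p hp).1 q hq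
    have : Icc p.1 p.2 ⊆ Icc (0:ℝ) 1 := by
      rw [← closure_Ioo hp.1.ne]
      exact closure_minimal (hp.2.1.trans hb) isClosed_Icc
    have b1 := this (left_mem_Icc.2 hp.1.le)
    have b2 := this (right_mem_Icc.2 hp.1.le)
    exact ⟨b1.1.trans a.1, a.2.1, a.2.2.trans b2.2⟩
  · intro y
    constructor
    · intro hy
      by_cases hyU : y ∈ U
      · obtain ⟨c, d, h1, h2, h3, h4, h5⟩ := comp_exists U hU hb y hyU
        have hp : (c, d) ∈ C := ⟨h1.trans h2, h3, h4, h5⟩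
        obtain ⟨q, hq, hyq⟩ := (hT (c,d) hp).2.2.1 y ⟨h1, h2⟩
        exact ⟨q, mem_biUnion hp hq, hyq⟩
      · obtain ⟨e, he, h⟩ := hL y hy
        have hz : y - e/2 ∈ U := h ⟨by linarith, by linarith⟩
        obtain ⟨c, d, h1, h2, h3, h4, h5⟩ := comp_exists U hU hb _ hz
        have hp : (c, d) ∈ C := ⟨h1.trans h2, h3, h4, h5⟩
        have hdy : d = y := by
          apply le_antisymm
          · by_contra! hh; exact hyU (h3 ⟨by linarith, hh⟩)
          · by_contra! hh; exact h5 (h ⟨by linarith, hh⟩)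
        subst hdy
        obtain ⟨q, hq, hyq⟩ := (hT _ hp).2.2.2.2.1 hy
        have := (hT _ hp).1 q hq
        exact ⟨q, mem_biUnion hp hq, by simp only at hyq; rw [← hyq]; exact this.2.1, hyq.ge⟩
    · rintro ⟨q, hq, hyq⟩
      simp only [mem_iUnion] at hq
      obtain ⟨p, hp, hq⟩ := hq
      have a := (hT p hp).1 q hq
      rcases (hyq.2.trans a.2.2).lt_or_eq with h | h
      · exact (hp.2.1 ⟨a.1.trans_lt hyq.1, h⟩).1
      · by_contra hy
        have := (hT p hp).2.2.2.2.2.1 (h ▸ hy) q hq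
        linarith [hyq.2]
  · intro y
    constructor
    · intro hy
      by_cases hyU : y ∈ U
      · obtain ⟨c, d, h1, h2, h3, h4, h5⟩ := comp_exists U hU hb y hyU
        have hp : (c, d) ∈ C := ⟨h1.trans h2, h3, h4, h5⟩
        obtain ⟨q, hq, hyq⟩ := (hT (c,d) hp).2.2.2.1 y ⟨h1, h2⟩
        exact ⟨q, mem_biUnion hp hq, hyq⟩
      · obtain ⟨e, he, h⟩ := hR y hy
        have hz : y + e/2 ∈ U := h ⟨by linarith, by linarith⟩
        obtain ⟨c, d, h1, h2, h3, h4, h5⟩ := comp_exists U hU hb _ hz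
        have hp : (c, d) ∈ C := ⟨h1.trans h2, h3, h4, h5⟩
        have hdy : c = y := by
          apply le_antisymm
          · by_contra! hh; exact h4 (h ⟨hh, by linarith⟩)
          · by_contra! hh; exact hyU (h3 ⟨hh, by linarith⟩)
        subst hdy
        obtain ⟨q, hq, hyq⟩ := (hT _ hp).2.2.2.2.2.2.1 hy
        have := (hT _ hp).1 q hq
        exact ⟨q, mem_biUnion hp hq, hyq.le, by simp only at hyq; rw [← hyq]; exact this.2.1⟩
    · rintro ⟨q, hq, hyq⟩
      simp only [mem_iUnion] at hq
      obtain ⟨p, hp, hq⟩ := hq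
      have a := (hT p hp).1 q hq
      rcases (a.1.trans hyq.1).lt_or_eq with h | h
      · exact (hp.2.1 ⟨h, hyq.2.trans_le a.2.2⟩).2
      · by_contra hy
        have := (hT p hp).2.2.2.2.2.2.2 (h ▸ hy) q hq
        linarith [hyq.1]

lemma enat_cut (P : ℕ → Prop) (h0 : P 0) (h : ∀ j, P (j+1) → P j) :
    ∃ k : ℕ∞, ∀ j : ℕ, (j : ℕ∞) ≤ k ↔ P j := by
  classical
  have anti : ∀ i j, i ≤ j → P j → P i := by
    intro i j hij
    induction hij with
    | refl => exact id
    | step _ ih => exact fun hp => ih (h _ hp)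
  by_cases hall : ∀ j, P j
  · exact ⟨⊤, fun j => by simp [hall j]⟩
  · push Not at hall
    have h1 := Nat.find_spec hall
    obtain ⟨m, hm⟩ := Nat.exists_eq_succ_of_ne_zero (n := Nat.find hall) (fun h => h1 (h ▸ h0))
    refine ⟨(m : ℕ∞), fun j => ?_⟩
    rw [Nat.cast_le]
    constructor
    · intro hj; by_contra hn
      have := Nat.find_min' hall hn
      omega
    · intro hj; by_contra hn
      exact h1 (anti _ j (by omega) hj)

lemma balance (A B : ℕ∞) (m : ℕ) (h : (m : ℕ∞) ≤ A + B) : ∃ k l : ℕ∞, (m:ℕ∞) = k + l ∧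
    k ≤ A ∧ l ≤ B ∧ ∀ j : ℕ, 2 * j ≤ m → (j : ℕ∞) ≤ A → (j : ℕ∞) ≤ B → (j : ℕ∞) ≤ k ∧ (j : ℕ∞) ≤ l := by
  obtain ⟨a, ha⟩ : ∃ a : ℕ, min A m = a := by
    have : min A (m:ℕ∞) ≠ ⊤ := by
      intro h; have := min_le_right A (m:ℕ∞); rw [h] at this; simp at this
    exact (ENat.ne_top_iff_exists.1 this).imp fun _ h => h.symm
  obtain ⟨b, hb⟩ : ∃ a : ℕ, min B m = a := by
    have : min B (m:ℕ∞) ≠ ⊤ := by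
      intro h; have := min_le_right B (m:ℕ∞); rw [h] at this; simp at this
    exact (ENat.ne_top_iff_exists.1 this).imp fun _ h => h.symm
  have haA : (a:ℕ∞) ≤ A := ha ▸ min_le_left _ _
  have hbB : (b:ℕ∞) ≤ B := hb ▸ min_le_left _ _
  have ham : a ≤ m := by exact_mod_cast ha ▸ min_le_right A (m:ℕ∞)
  have hbm : b ≤ m := by exact_mod_cast hb ▸ min_le_right B (m:ℕ∞)
  have hab : m ≤ a + b := by
    rcases le_total A (m:ℕ∞) with h1 | h1
    · rw [min_eq_left h1] at ha
      rcases le_total B (m:ℕ∞) with h2 | h2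
      · rw [min_eq_left h2] at hb
        rw [ha, hb] at h; exact_mod_cast h
      · rw [min_eq_right h2] at hb
        have : m = b := by exact_mod_cast hb
        omega
    · rw [min_eq_right h1] at ha
      have : m = a := by exact_mod_cast ha
      omega
  refine ⟨((max (min a (m/2)) (m - b) : ℕ) : ℕ∞), ((m - max (min a (m/2)) (m - b) : ℕ) : ℕ∞), ?_, ?_, ?_, ?_⟩
  · norm_cast; omega
  · refine le_trans ?_ haA; norm_cast; omega
  · refine le_trans ?_ hbB; norm_cast; omega
  · intro j hj h1 h2
    have h1' : j ≤ a := by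
      have : (j:ℕ∞) ≤ min A m := le_min h1 (by norm_cast; omega)
      rw [ha] at this; exact_mod_cast this
    have h2' : j ≤ b := by
      have : (j:ℕ∞) ≤ min B m := le_min h2 (by norm_cast; omega)
      rw [hb] at this; exact_mod_cast this
    norm_cast; omega

def LeftP (f : ℝ → ℕ∞) (y : ℝ) (j : ℕ) : Prop :=
  0 < y ∧ ∃ ε > 0, ∀ z ∈ Icc (0:ℝ) 1, y - ε < z → z < y → ((1 + 2 * j : ℕ) : ℕ∞) ≤ f z

def RightP (f : ℝ → ℕ∞) (y : ℝ) (j : ℕ) : Prop :=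
  y < 1 ∧ ∃ ε > 0, ∀ z ∈ Icc (0:ℝ) 1, y < z → z < y + ε → ((1 + 2 * j : ℕ) : ℕ∞) ≤ f z

lemma not_leftP {f : ℝ → ℕ∞} {y : ℝ} {j : ℕ} (h : ¬ LeftP f y j) (hy : 0 < y) (ε : ℝ) (he : ε > 0) :
    ∃ z ∈ Icc (0:ℝ) 1, y - ε < z ∧ z < y ∧ ∃ n : ℕ, f z = n ∧ n ≤ 2 * j := by
  unfold LeftP at h
  push Not at h
  obtain ⟨z, hz, h1, h2, h3⟩ := h hy ε he
  refine ⟨z, hz, h1, h2, ?_⟩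
  obtain ⟨n, hn⟩ := ENat.ne_top_iff_exists.1 (ne_top_of_lt h3)
  refine ⟨n, hn.symm, ?_⟩
  rw [← hn] at h3
  have : n < 1 + 2 * j := by exact_mod_cast h3
  omega

lemma not_rightP {f : ℝ → ℕ∞} {y : ℝ} {j : ℕ} (h : ¬ RightP f y j) (hy : y < 1) (ε : ℝ) (he : ε > 0) :
    ∃ z ∈ Icc (0:ℝ) 1, y < z ∧ z < y + ε ∧ ∃ n : ℕ, f z = n ∧ n ≤ 2 * j := by
  unfold RightP at h
  push Not at h
  obtain ⟨z, hz, h1, h2, h3⟩ := h hy ε he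
  refine ⟨z, hz, h1, h2, ?_⟩
  obtain ⟨n, hn⟩ := ENat.ne_top_iff_exists.1 (ne_top_of_lt h3)
  refine ⟨n, hn.symm, ?_⟩
  rw [← hn] at h3
  have : n < 1 + 2 * j := by exact_mod_cast h3
  omega

lemma enat_cancel (a b : ℕ) (x : ℕ∞) (n : ℕ) (h : (n : ℕ∞) ≤ (a : ℕ∞) + x) (hab : a + b ≤ n) :
    (b : ℕ∞) ≤ x := by
  induction x using ENat.recTopCoe with
  | top => exact le_top
  | coe x => 
    have : n ≤ a + x := by exact_mod_cast h
    exact_mod_cast (by omega : b ≤ x)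

lemma germ_select (f : ℝ → ℕ∞) (hf : ∀ y ∈ Set.Icc (0:ℝ) 1, 1 ≤ f y) (h1 : Cond1 f)
    (h2 : ∀ y ∈ Set.Icc (0:ℝ) 1, f y = ⊤ → CondStar f y) (y : ℝ) (hy : y ∈ Icc (0:ℝ) 1) :
    ∃ k l : ℕ∞, f y = 1 + k + l ∧
    (∀ j : ℕ, 1 ≤ j → (j : ℕ∞) ≤ k → LeftP f y j) ∧
    (∀ j : ℕ, 1 ≤ j → (j : ℕ∞) ≤ l → RightP f y j) ∧
    (∀ j : ℕ, LeftP f y j → RightP f y j → ((1 + 2 * j : ℕ) : ℕ∞) ≤ f y →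
      (j : ℕ∞) ≤ k ∧ (j : ℕ∞) ≤ l) := by
  obtain ⟨A, hA⟩ := enat_cut (fun j => j = 0 ∨ LeftP f y j) (Or.inl rfl) (by
    rintro j (h | h)
    · omega
    · right
      refine ⟨h.1, h.2.imp fun ε hε => ⟨hε.1, fun z hz a b => le_trans ?_ (hε.2 z hz a b)⟩⟩
      norm_cast; omega)
  obtain ⟨B, hB⟩ := enat_cut (fun j => j = 0 ∨ RightP f y j) (Or.inl rfl) (by
    rintro j (h | h)
    · omega
    · right
      refine ⟨h.1, h.2.imp fun ε hε => ⟨hε.1, fun z hz a b => le_trans ?_ (hε.2 z hz a b)⟩⟩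
      norm_cast; omega)
  have hA' : ∀ j : ℕ, 1 ≤ j → (j : ℕ∞) ≤ A → LeftP f y j := fun j hj h => 
    ((hA j).1 h).resolve_left (by omega)
  have hB' : ∀ j : ℕ, 1 ≤ j → (j : ℕ∞) ≤ B → RightP f y j := fun j hj h => 
    ((hB j).1 h).resolve_left (by omega)
  have top_of : ∀ A : ℕ∞, (∀ j : ℕ, (j : ℕ∞) ≤ A) → A = ⊤ := fun A h => ENat.eq_top_iff_forall_ge.2 h
  by_cases hfy : f y = ⊤
  · refine ⟨A, B, ?_, hA', hB', fun j hl hr _ => ⟨(hA j).2 (Or.inr hl), (hB j).2 (Or.inr hr)⟩⟩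
    have hs := h2 y hy hfy
    have : A = ⊤ ∨ B = ⊤ := by
      by_cases hl : ∀ j, LeftP f y j
      · exact Or.inl (top_of A fun j => (hA j).2 (Or.inr (hl j)))
      · right
        push Not at hl
        obtain ⟨j0, hj0⟩ := hl
        apply top_of B
        intro j
        refine (hB j).2 (Or.inr ?_)
        obtain ⟨ε, he, e1, e2, e3⟩ := hs (2 * j0 + (1 + 2 * j) + 1)
        rcases hy.1.eq_or_lt with h0 | h0
        · refine ⟨by linarith, ε, he, fun z hz hz1 hz2 => ?_⟩
          have := e2 h0.symm z hz (by linarith) (by linarith)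
          exact enat_cancel 1 _ _ (2 * j0 + (1 + 2 * j) + 1) (by exact_mod_cast this) (by omega)
        · rcases hy.2.eq_or_lt with h3 | h3
          · exfalso
            have hs := hs (1 + 2 * j0 + 1)
            obtain ⟨ε, he, e1, e2, e3⟩ := hs
            refine hj0 ⟨h0, ε, he, fun z hz hz1 hz2 => ?_⟩
            have := e3 h3 z hz (by linarith) (by linarith)
            rw [add_comm (f z) 1] at this
            exact enat_cancel 1 _ _ (1 + 2 * j0 + 1) (by exact_mod_cast this) (by omega)
          · obtain ⟨w, hw, hw1, hw2, n, hn, hnj⟩ := not_leftP hj0 h0 ε he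
            refine ⟨h3, ε, he, fun z hz hz1 hz2 => ?_⟩
            have := e1 w hw z hz hw1 hw2 hz1 hz2
            rw [hn] at this
            exact enat_cancel n _ _ _ this (by omega)
    rcases this with h | h <;> simp [hfy, h]
  · obtain ⟨n, hn⟩ := ENat.ne_top_iff_exists.1 hfy
    have hn1 : 1 ≤ n := by have := hf y hy; rw [← hn] at this; exact_mod_cast this
    obtain ⟨m, rfl⟩ := Nat.exists_eq_add_of_le hn1
    have hAB : (m : ℕ∞) ≤ A + B := by
      by_contra! hlt
      have hAt : A ≠ ⊤ := by rintro rfl; simp at hlt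
      have hBt : B ≠ ⊤ := by rintro rfl; simp at hlt
      obtain ⟨a, rfl⟩ := ENat.ne_top_iff_exists.1 hAt
      obtain ⟨b, rfl⟩ := ENat.ne_top_iff_exists.1 hBt
      have hlt' : a + b < m := by exact_mod_cast hlt
      have hnl : ¬ LeftP f y (a+1) := by
        intro h
        have := (hA (a+1)).2 (Or.inr h)
        have : a + 1 ≤ a := by exact_mod_cast this
        omega
      have hnr : ¬ RightP f y (b+1) := by
        intro h
        have := (hB (b+1)).2 (Or.inr h)
        have : b + 1 ≤ b := by exact_mod_cast this
        omega
      rcases hy.1.eq_or_lt with h0 | h0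
      · subst h0
        obtain ⟨ε, he, h⟩ := h1.2.1 hfy
        obtain ⟨z, hz, hz1, hz2, q, hq, hqj⟩ := not_rightP hnr (by norm_num) ε he
        have := h z hz hz1 (by linarith)
        rw [hq, ← hn] at this
        have : 2 * (1 + m) ≤ 1 + q := by exact_mod_cast this
        omega
      rcases hy.2.eq_or_lt with h3 | h3
      · subst h3
        obtain ⟨ε, he, h⟩ := h1.2.2 hfy
        obtain ⟨z, hz, hz1, hz2, q, hq, hqj⟩ := not_leftP hnl (by norm_num) ε he
        have := h z hz hz1 (by linarith)
        rw [hq, ← hn] at this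
        have : 2 * (1 + m) ≤ q + 1 := by exact_mod_cast this
        omega
      obtain ⟨ε, he, h⟩ := h1.1 y ⟨h0, h3⟩ hfy
      obtain ⟨z, hz, hz1, hz2, q, hq, hqj⟩ := not_leftP hnl h0 ε he
      obtain ⟨w, hw, hw1, hw2, r, hr, hrj⟩ := not_rightP hnr h3 ε he
      obtain ⟨g1, g2⟩ := h z hz w hw hz1 hz2 hw1 hw2
      rw [hq, hr, ← hn] at g1 g2
      have g1' : 2 * (1 + m) ≤ q + r := by exact_mod_cast g1
      obtain ⟨⟨k, hk, hodd⟩, -⟩ := g2 (by norm_cast; omega)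
      have : q = k := by exact_mod_cast hk
      obtain ⟨i, hi⟩ := hodd
      omega
    obtain ⟨k, l, hkl, hk, hl, hj⟩ := balance A B m hAB
    refine ⟨k, l, ?_, fun j h h' => hA' j h (h'.trans hk), fun j h h' => hB' j h (h'.trans hl), ?_⟩
    · rw [← hn, add_assoc, ← hkl]; norm_cast
    · intro j h h' h''
      refine hj j ?_ ((hA j).2 (Or.inr h)) ((hB j).2 (Or.inr h'))
      rw [← hn] at h''
      have : 1 + 2 * j ≤ 1 + m := by exact_mod_cast h''
      omega

lemma encard_lt_enat (k : ℕ∞) : {j : ℕ | ((j + 1 : ℕ) : ℕ∞) ≤ k}.encard = k := by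
  induction k using ENat.recTopCoe with
  | top => simp
  | coe k =>
    convert Nat.encard_range k using 3
    norm_cast

lemma inj_choice_s9 {ι : Type} [Countable ι] (c d : ι → ℝ) (h : ∀ i, c i < d i) :
    ∃ s : ι → ℝ, Function.Injective s ∧ ∀ i, s i ∈ Ioo (c i) (d i) := by
  classical
  obtain ⟨e, he⟩ := exists_injective_nat ι
  have : ∀ i, ∃ t : Finset ℝ, (t : Set ℝ) ⊆ Ioo (c i) (d i) ∧ t.card = e i + 1 :=
    fun i => (Ioo_infinite (h i)).exists_subset_card_eq _
  choose t ht1 ht2 using this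
  obtain ⟨s, hs1, hs2⟩ := (Finset.all_card_le_biUnion_card_iff_exists_injective t).1 (by
    intro S
    rcases S.eq_empty_or_nonempty with rfl | hne
    · simp
    obtain ⟨i, hi, hmax⟩ := S.exists_max_image e hne
    calc S.card = (S.image e).card := (Finset.card_image_of_injective _ he).symm
      _ ≤ (Finset.range (e i + 1)).card := by
        apply Finset.card_le_card
        intro n hn
        obtain ⟨j, hj, rfl⟩ := Finset.mem_image.1 hn
        exact Finset.mem_range.2 (Nat.lt_succ_of_le (hmax j hj))
      _ = (t i).card := by rw [ht2]; simp
      _ ≤ _ := Finset.card_le_card (Finset.subset_biUnion_of_mem t hi))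
  exact ⟨s, hs1, fun i => ht1 i (hs2 i)⟩

lemma bump (c p d : ℝ) (h1 : c < p) (h2 : p < d) : ∃ β : ℝ → ℝ, Continuous β ∧ β 0 = p ∧ β 1 = p ∧
    ∃ A ⊆ Ioc (0:ℝ) 1, BijOn β A (Ioc c d) ∧ BijOn β (Ioc (0:ℝ) 1 \ A) (Ico c d) := by
  have a1 : 0 < p - c := sub_pos.2 h1
  have a2 : 0 < d - p := sub_pos.2 h2
  have a3 : 0 < d - c := by linarith
  set β : ℝ → ℝ := fun t => if t ≤ 1/3 then p + (d - p) * (3 * t) else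
    (if t ≤ 2/3 then d - (d - c) * (3 * t - 1) else c + (p - c) * (3 * t - 2)) with hβ
  have e1 : ∀ t < 1/3, β t = p + (d - p) * (3 * t) := fun t ht => by simp only [hβ, if_pos ht.le]
  have e2 : ∀ t, 1/3 ≤ t → t < 2/3 → β t = d - (d - c) * (3 * t - 1) := by
    intro t h h'
    rcases h.eq_or_lt with rfl | h
    · simp [hβ]
    · simp only [hβ, if_neg (not_le.2 h), if_pos h'.le]
  have e3 : ∀ t, 2/3 ≤ t → β t = c + (p - c) * (3 * t - 2) := by
    intro t h
    rcases h.eq_or_lt with rfl | h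
    · simp only [hβ]; norm_num
    · simp only [hβ, if_neg (not_le.2 h), if_neg (not_le.2 (by linarith : 1/3 < t))]
  refine ⟨β, ?_, ?_, ?_, Ico (1/3) (2/3), ?_, ⟨?_, ?_, ?_⟩, ⟨?_, ?_, ?_⟩⟩
  · refine Continuous.if_le (by fun_prop) (Continuous.if_le (by fun_prop) (by fun_prop) (by fun_prop) (by fun_prop) ?_) (by fun_prop) (by fun_prop) ?_
    · rintro x rfl; ring
    · rintro x rfl; norm_num
  · rw [e1 0 (by norm_num)]; ring
  · rw [e3 1 (by norm_num)]; ring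
  · intro t ht; exact ⟨by linarith [ht.1], by linarith [ht.2]⟩
  · intro t ht
    rw [e2 t ht.1 ht.2]
    constructor <;> nlinarith [ht.1, ht.2]
  · intro t ht t' ht' h
    rw [e2 t ht.1 ht.2, e2 t' ht'.1 ht'.2] at h
    have : (d - c) * (3 * t - 1) = (d - c) * (3 * t' - 1) := by linarith
    have := mul_left_cancel₀ a3.ne' this
    linarith
  · intro y hy
    have h0 : 0 ≤ (d - y) / (d - c) := div_nonneg (by linarith [hy.2]) a3.le
    have h1 : (d - y) / (d - c) < 1 := by rw [div_lt_one a3]; linarith [hy.1]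
    refine ⟨((d - y) / (d - c) + 1) / 3, ⟨by linarith, by linarith⟩, ?_⟩
    rw [e2 _ (by linarith) (by linarith)]
    field_simp; ring
  · intro t ht
    have : t < 1/3 ∨ 2/3 ≤ t := by
      by_contra! h; exact ht.2 h
    rcases this with h | h
    · rw [e1 t h]
      have := ht.1.1
      constructor <;> nlinarith
    · rw [e3 t h]
      have := ht.1.2
      constructor <;> nlinarith
  · intro t ht t' ht' h
    have h1 : t < 1/3 ∨ 2/3 ≤ t := by
      by_contra! h; exact ht.2 h
    have h2 : t' < 1/3 ∨ 2/3 ≤ t' := by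
      by_contra! h; exact ht'.2 h
    have b1 := ht.1.1
    have b2 := ht.1.2
    have b3 := ht'.1.1
    have b4 := ht'.1.2
    rcases h1 with h1 | h1 <;> rcases h2 with h2 | h2
    · rw [e1 _ h1, e1 _ h2] at h
      have : (d - p) * (3 * t) = (d - p) * (3 * t') := by linarith
      have := mul_left_cancel₀ a2.ne' this
      linarith
    · rw [e1 _ h1, e3 _ h2] at h
      exfalso; nlinarith
    · rw [e3 _ h1, e1 _ h2] at h
      exfalso; nlinarith
    · rw [e3 _ h1, e3 _ h2] at h
      have : (p - c) * (3 * t - 2) = (p - c) * (3 * t' - 2) := by linarith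
      have := mul_left_cancel₀ a1.ne' this
      linarith
  · intro y hy
    rcases le_or_gt y p with h | h
    · have h0 : 0 ≤ (y - c) / (p - c) := div_nonneg (by linarith [hy.1]) a1.le
      have h1 : (y - c) / (p - c) ≤ 1 := by rw [div_le_one a1]; linarith
      refine ⟨((y - c) / (p - c) + 2) / 3, ⟨⟨by linarith, by linarith⟩, fun h => by linarith [h.2]⟩, ?_⟩
      rw [e3 _ (by linarith)]
      field_simp; ring
    · have h0 : 0 < (y - p) / (d - p) := div_pos (by linarith [hy.1]) a2
      have h1 : (y - p) / (d - p) < 1 := by rw [div_lt_one a2]; linarith [hy.2]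
      refine ⟨((y - p) / (d - p)) / 3, ⟨⟨by linarith, by linarith⟩, fun h => by linarith [h.1]⟩, ?_⟩
      rw [e1 _ (by linarith)]
      field_simp; ring

open Filter Topology in
lemma domain_exists {ι : Type} [Countable ι] (s : ι → ℝ) (hs : ∀ i, s i ∈ Ioo (0:ℝ) 1) :
    ∃ H W : ℝ → ℝ, H 0 = 0 ∧ H 1 = 1 ∧ (∀ x, 0 ≤ W x) ∧ (∀ i, 0 < W (s i)) ∧
    (∀ x, x ∉ range s → W x = 0) ∧ (∀ x y, x < y → H x + W x < H y) ∧
    (∀ u ∈ Icc (0:ℝ) 1, ∃ x ∈ Icc (0:ℝ) 1, H x ≤ u ∧ u ≤ H x + W x) := by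
  classical
  have : Encodable ι := Encodable.ofCountable ι
  obtain ⟨w, hw, M, hM, -⟩ := posSumOfEncodable (one_pos : (0:ℝ) < 1) ι
  have hsum := hM.summable
  have sm : ∀ P : ι → Prop, Summable (fun i => if P i then w i else 0) := by
    intro P
    refine hsum.of_nonneg_of_le (fun i => ?_) (fun i => ?_)
    · split_ifs; exacts [(hw i).le, le_rfl]
    · split_ifs; exacts [le_rfl, (hw i).le]
  have nn : ∀ P : ι → Prop, 0 ≤ ∑' i, (if P i then w i else 0) := by
    intro P
    refine tsum_nonneg fun i => ?_
    split_ifs; exacts [(hw i).le, le_rfl]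
  have mono : ∀ P Q : ι → Prop, (∀ i, P i → Q i) → ∑' i, (if P i then w i else 0) ≤ ∑' i, (if Q i then w i else 0) := by
    intro P Q h
    refine (sm P).tsum_le_tsum (fun i => ?_) (sm Q)
    by_cases hP : P i
    · simp [hP, h i hP]
    · simp only [hP, if_false]; split_ifs; exacts [(hw i).le, le_rfl]
  have hM0 : 0 ≤ M := hM.nonneg fun i => (hw i).le
  have hM1 : 0 < 1 + M := by linarith
  set H : ℝ → ℝ := fun x => (x + ∑' i, (if s i < x then w i else 0)) / (1 + M) with hH
  set W : ℝ → ℝ := fun x => (∑' i, (if s i = x then w i else 0)) / (1 + M) with hW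
  have hHW : ∀ x, H x + W x = (x + ∑' i, (if s i ≤ x then w i else 0)) / (1 + M) := by
    intro x
    rw [hH, hW]; simp only
    rw [← add_div, add_assoc, ← (sm _).tsum_add (sm _)]
    congr 3
    ext i
    rcases lt_trichotomy (s i) x with h | h | h
    · simp [h, h.le, h.ne]
    · simp [h]
    · simp [h.not_ge, h.not_gt, h.ne']
  have hlt : ∀ x y, x < y → H x + W x < H y := by
    intro x y hxy
    rw [hHW]
    apply div_lt_div_of_pos_right _ hM1
    have := mono (fun i => s i ≤ x) (fun i => s i < y) (fun i h => h.trans_lt hxy)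
    linarith
  have hWn : ∀ x, 0 ≤ W x := fun x => div_nonneg (nn _) hM1.le
  have hHlt : ∀ x y, x < y → H x < H y := fun x y h => by linarith [hlt x y h, hWn x]
  have tL : ∀ x, Tendsto H (𝓝[<] x) (𝓝 (H x)) := by
    intro x
    refine Tendsto.div_const (Tendsto.add ?_ ?_) _
    · exact tendsto_nhdsWithin_of_tendsto_nhds tendsto_id
    · refine tendsto_tsum_of_dominated_convergence hsum (fun i => ?_) (Eventually.of_forall fun y i => ?_)
      · apply tendsto_const_nhds.congr'
        by_cases h : s i < x
        · filter_upwards [Ioo_mem_nhdsLT h] with y hy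
          simp [h, hy.1]
        · filter_upwards [self_mem_nhdsWithin] with y hy
          have : ¬ s i < y := fun h' => h (h'.trans hy)
          simp [h, this]
      · split_ifs
        · simp [abs_of_pos (hw i)]
        · simp [(hw i).le]
  have tR : ∀ x, Tendsto H (𝓝[>] x) (𝓝 (H x + W x)) := by
    intro x
    rw [hHW]
    refine Tendsto.div_const (Tendsto.add ?_ ?_) _
    · exact tendsto_nhdsWithin_of_tendsto_nhds tendsto_id
    · refine tendsto_tsum_of_dominated_convergence hsum (fun i => ?_) (Eventually.of_forall fun y i => ?_)
      · apply tendsto_const_nhds.congr'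
        by_cases h : s i ≤ x
        · filter_upwards [self_mem_nhdsWithin] with y hy
          have : s i < y := h.trans_lt hy
          simp [h, this]
        · filter_upwards [Ioo_mem_nhdsGT (not_le.1 h)] with y hy
          simp [h, hy.2.not_gt]
      · split_ifs
        · simp [abs_of_pos (hw i)]
        · simp [(hw i).le]
  have hH0 : H 0 = 0 := by
    have : ∀ i, ¬ s i < 0 := fun i => (hs i).1.not_gt
    simp [hH, this]
  have hH1 : H 1 = 1 := by
    have : ∀ i, s i < 1 := fun i => (hs i).2
    simp only [hH, this, if_true, hM.tsum_eq]
    exact div_self hM1.ne'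
  refine ⟨H, W, hH0, hH1, hWn, ?_, ?_, hlt, ?_⟩
  · intro i
    refine div_pos ((sm _).tsum_pos (fun j => ?_) i ?_) hM1
    · split_ifs; exacts [(hw j).le, le_rfl]
    · simp [hw i]
  · intro x hx
    have : ∀ i, s i ≠ x := fun i h => hx ⟨i, h⟩
    simp [hW, this]
  · intro u hu
    set S : Set ℝ := {x | x ∈ Icc (0:ℝ) 1 ∧ H x ≤ u} with hS
    have h0S : (0:ℝ) ∈ S := ⟨⟨le_rfl, zero_le_one⟩, by rw [hH0]; exact hu.1⟩
    have hbS : BddAbove S := ⟨1, fun x hx => hx.1.2⟩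
    have hx0 : 0 ≤ sSup S := le_csSup hbS h0S
    have hx1 : sSup S ≤ 1 := csSup_le ⟨0, h0S⟩ fun x hx => hx.1.2
    refine ⟨sSup S, ⟨hx0, hx1⟩, ?_, ?_⟩
    · refine le_of_tendsto (tL _) ?_
      filter_upwards [self_mem_nhdsWithin] with y hy
      obtain ⟨x, hx, hyx⟩ := exists_lt_of_lt_csSup ⟨0, h0S⟩ hy
      exact (hHlt _ _ hyx).le.trans hx.2
    · rcases hx1.eq_or_lt with h | h
      · rw [h, hH1]; linarith [hWn 1, hu.2]
      · refine ge_of_tendsto (tR _) ?_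
        filter_upwards [Ioo_mem_nhdsGT h] with y hy
        by_contra! hc
        have : y ∈ S := ⟨⟨hx0.trans hy.1.le, hy.2.le⟩, hc.le⟩
        exact absurd (le_csSup hbS this) (not_le.2 hy.1)

lemma construct {ι : Type} [Countable ι] (c d : ι → ℝ) (h0 : ∀ i, 0 ≤ c i) (hcd : ∀ i, c i < d i)
    (h1 : ∀ i, d i ≤ 1) : ∃ F : ℝ → ℝ, DarbouxFun F ∧
        Set.MapsTo F (Set.Icc 0 1) (Set.Icc 0 1) ∧ F 0 = 0 ∧ F 1 = 1 ∧
        ∀ y ∈ Set.Icc (0:ℝ) 1, (Sec F y).Countable ∧ (Sec F y).encard = 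
          1 + {i | y ∈ Ioc (c i) (d i)}.encard + {i | y ∈ Ico (c i) (d i)}.encard := by
  classical
  obtain ⟨s, hsinj, hs⟩ := inj_choice_s9 c d hcd
  have hs01 : ∀ i, s i ∈ Ioo (0:ℝ) 1 := fun i => 
    ⟨(h0 i).trans_lt (hs i).1, (hs i).2.trans_le (h1 i)⟩
  have := fun i => bump (c i) (s i) (d i) (hs i).1 (hs i).2
  choose β hβc hβ0 hβ1 A hA hbL hbR using this
  obtain ⟨H, W, hH0, hH1, hW, hWs, hWn, hlt, hcov⟩ := domain_exists s hs01
  have huniq : ∀ x x' u, H x ≤ u → u ≤ H x + W x → H x' ≤ u → u ≤ H x' + W x' → x = x' := by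
    intro x x' u a1 a2 a3 a4
    rcases lt_trichotomy x x' with h | h | h
    · linarith [hlt _ _ h]
    · exact h
    · linarith [hlt _ _ h]
  have : ∀ u, ∃ x, u ∈ Icc (0:ℝ) 1 → x ∈ Icc (0:ℝ) 1 ∧ H x ≤ u ∧ u ≤ H x + W x := by
    intro u
    by_cases hu : u ∈ Icc (0:ℝ) 1
    · obtain ⟨x, hx⟩ := hcov u hu; exact ⟨x, fun _ => hx⟩
    · exact ⟨0, fun h => absurd h hu⟩
  choose g hg using this
  have hHmono : ∀ x y, x ≤ y → H x ≤ H y := by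
    intro x y h
    rcases h.eq_or_lt with rfl | h
    · rfl
    · linarith [hlt _ _ h, hW x]
  have hblk : ∀ x ∈ Icc (0:ℝ) 1, ∀ u, H x ≤ u → u ≤ H x + W x → u ∈ Icc (0:ℝ) 1 := by
    intro x hx u hu1 hu2
    refine ⟨(hH0 ▸ hHmono 0 x hx.1).trans hu1, hu2.trans ?_⟩
    rcases hx.2.eq_or_lt with h | h
    · rw [h, hH1, hWn 1]
      · simp
      · rintro ⟨i, hi⟩; exact (hs01 i).2.ne hi
    · exact (hH1 ▸ hlt x 1 h).le
  have hgx : ∀ x ∈ Icc (0:ℝ) 1, ∀ u, H x ≤ u → u ≤ H x + W x → g u = x := by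
    intro x hx u hu1 hu2
    have := hg u (hblk x hx u hu1 hu2)
    exact huniq _ _ u this.2.1 this.2.2 hu1 hu2
  set F : ℝ → ℝ := fun u => if h : ∃ i, s i = g u then β h.choose ((u - H (g u)) / W (g u)) else g u with hF
  have hF1 : ∀ i u, H (s i) ≤ u → u ≤ H (s i) + W (s i) → F u = β i ((u - H (s i)) / W (s i)) := by
    intro i u hu1 hu2
    have hgu := hgx (s i) ⟨(hs01 i).1.le, (hs01 i).2.le⟩ u hu1 hu2
    have hex : ∃ j, s j = g u := ⟨i, hgu.symm⟩
    have hch : hex.choose = i := hsinj (hex.choose_spec.trans hgu)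
    simp only [hF]
    rw [dif_pos hex, hch, hgu]
  have hF1' : ∀ i, ∀ t ∈ Icc (0:ℝ) 1, F (H (s i) + W (s i) * t) = β i t := by
    intro i t ht
    rw [hF1 i _ (by nlinarith [hWs i, ht.1]) (by nlinarith [hWs i, ht.2])]
    congr 1
    have := (hWs i).ne'
    field_simp; ring
  have hF2 : ∀ u ∈ Icc (0:ℝ) 1, g u ∉ range s → F u = g u ∧ u = H (g u) := by
    intro u hu hr
    have hex : ¬ ∃ j, s j = g u := hr
    refine ⟨by simp only [hF, dif_neg hex], ?_⟩
    have := hg u hu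
    rw [hWn _ hr] at this
    linarith
  have hFH : ∀ x ∈ Icc (0:ℝ) 1, F (H x) = x ∧ F (H x + W x) = x := by
    intro x hx
    have hWx := hW x
    by_cases hr : x ∈ range s
    · obtain ⟨i, rfl⟩ := hr
      have e1 := hF1' i 0 (by simp)
      have e2 := hF1' i 1 (by simp)
      simp only [mul_zero, add_zero, mul_one] at e1 e2
      rw [e1, e2]; exact ⟨hβ0 i, hβ1 i⟩
    · have hgu := hgx x hx (H x) le_rfl (by linarith)
      rw [hWn x hr, add_zero]
      have := (hF2 (H x) (hblk x hx _ le_rfl (by linarith)) (by rw [hgu]; exact hr)).1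
      rw [this, hgu]; exact ⟨rfl, rfl⟩
  have hmem : ∀ i, ∀ t ∈ Icc (0:ℝ) 1, H (s i) + W (s i) * t ∈ Icc (0:ℝ) 1 := by
    intro i t ht
    exact hblk (s i) ⟨(hs01 i).1.le, (hs01 i).2.le⟩ _ (by nlinarith [hWs i, ht.1]) (by nlinarith [hWs i, ht.2])
  have hdec : ∀ u ∈ Icc (0:ℝ) 1, (F u = g u ∧ u = H (g u)) ∨ ∃ i, ∃ t ∈ Ioc (0:ℝ) 1, u = H (s i) + W (s i) * t := by
    intro u hu
    by_cases hr : g u ∈ range s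
    · obtain ⟨i, hi⟩ := hr
      have hgu := hg u hu
      rcases hgu.2.1.eq_or_lt with h | h
      · left
        refine ⟨?_, h.symm⟩
        have := (hFH _ hgu.1).1
        rwa [h] at this
      · right
        rw [← hi] at hgu h
        have hWi := hWs i
        refine ⟨i, (u - H (s i)) / W (s i), ⟨div_pos (by linarith) hWi, ?_⟩, ?_⟩
        · rw [div_le_one hWi]; linarith
        · field_simp; ring
    · exact Or.inl (hF2 u hu hr)
  have hinj : ∀ i j, ∀ t ∈ Icc (0:ℝ) 1, ∀ t' ∈ Icc (0:ℝ) 1, 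
      H (s i) + W (s i) * t = H (s j) + W (s j) * t' → i = j ∧ t = t' := by
    intro i j t ht t' ht' h
    have : s i = s j := huniq _ _ (H (s i) + W (s i) * t) (by nlinarith [hWs i, ht.1]) (by nlinarith [hWs i, ht.2])
      (by rw [h]; nlinarith [hWs j, ht'.1]) (by rw [h]; nlinarith [hWs j, ht'.2])
    have := hsinj this
    subst this
    exact ⟨rfl, mul_left_cancel₀ (hWs i).ne' (add_left_cancel h)⟩
  have hninj : ∀ y, ∀ i, ∀ t ∈ Ioc (0:ℝ) 1, H y ≠ H (s i) + W (s i) * t := by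
    intro y i t ht h
    have : y = s i := huniq _ _ (H y) le_rfl (by linarith [hW y])
      (by rw [h]; nlinarith [hWs i, ht.1]) (by rw [h]; nlinarith [hWs i, ht.2])
    subst this
    nlinarith [hWs i, ht.1]
  have hβmem : ∀ i, ∀ t ∈ Ioc (0:ℝ) 1, β i t ∈ Icc (c i) (d i) := by
    intro i t ht
    by_cases hA' : t ∈ A i
    · exact Ioc_subset_Icc_self ((hbL i).mapsTo hA')
    · exact Ico_subset_Icc_self ((hbR i).mapsTo ⟨ht, hA'⟩)
  have hdar : ∀ x ∈ Icc (0:ℝ) 1, ∀ u v, H x ≤ u → u ≤ v → v ≤ H x + W x → 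
      ∀ t ∈ uIcc (F u) (F v), ∃ z ∈ Icc u v, F z = t := by
    intro x hx u v hu huv hv t ht
    by_cases hr : x ∈ range s
    · obtain ⟨i, rfl⟩ := hr
      have hc : ContinuousOn F (uIcc u v) := by
        rw [uIcc_of_le huv]
        refine ContinuousOn.congr (f := fun z => β i ((z - H (s i)) / W (s i))) ?_ ?_
        · have := hβc i
          fun_prop
        · intro z hz
          exact hF1 i z (hu.trans hz.1) (hz.2.trans hv)
      have := intermediate_value_uIcc hc ht
      rwa [uIcc_of_le huv] at this
    · rw [hWn x hr] at hv
      have : u = v := by linarith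
      subst this
      rw [uIcc_self] at ht
      exact ⟨u, ⟨le_rfl, le_rfl⟩, ht.symm⟩
  refine ⟨F, ?_, ?_, ?_, ?_, ?_⟩
  · intro a b ha hb hab t ht
    obtain ⟨hga, ha1, ha2⟩ := hg a ha
    obtain ⟨hgb, hb1, hb2⟩ := hg b hb
    rcases lt_trichotomy (g a) (g b) with h | h | h
    · have hl := hlt _ _ h
      have case1 : t ∈ uIcc (F a) (g a) → ∃ x ∈ Icc a b, F x = t := by
        intro ht
        obtain ⟨z, hz, hzt⟩ := hdar (g a) hga a (H (g a) + W (g a)) ha1 ha2 le_rfl t (by rw [(hFH _ hga).2]; exact ht)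
        exact ⟨z, ⟨hz.1, by linarith [hz.2]⟩, hzt⟩
      rcases uIcc_subset_uIcc_union_uIcc (b := g a) ht with ht | ht
      · exact case1 ht
      rcases uIcc_subset_uIcc_union_uIcc (b := g b) ht with ht | ht
      · rw [uIcc_of_le h.le] at ht
        rcases ht.1.eq_or_lt with h' | h'
        · exact case1 (h' ▸ right_mem_uIcc)
        · exact ⟨H t, ⟨by linarith [hlt _ _ h'], by linarith [hHmono _ _ ht.2]⟩, 
            (hFH t ⟨hga.1.trans ht.1, ht.2.trans hgb.2⟩).1⟩
      · obtain ⟨z, hz, hzt⟩ := hdar (g b) hgb (H (g b)) b le_rfl hb1 hb2 t (by rw [(hFH _ hgb).1]; exact ht)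
        exact ⟨z, ⟨by linarith [hz.1], hz.2⟩, hzt⟩
    · exact hdar (g a) hga a b ha1 hab (by rw [h]; exact hb2) t ht
    · exfalso; linarith [hlt _ _ h]
  · intro u hu
    rcases hdec u hu with h | ⟨i, t, ht, rfl⟩
    · rw [h.1]; exact (hg u hu).1
    · rw [hF1' i t (Ioc_subset_Icc_self ht)]
      have := hβmem i t ht
      exact ⟨(h0 i).trans this.1, this.2.trans (h1 i)⟩
  · have := (hFH 0 (by simp)).1; rwa [hH0] at this
  · have := (hFH 1 (by simp)).1; rwa [hH1] at this
  · intro y hy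
    have eL : ∀ i, ∃ t, y ∈ Ioc (c i) (d i) → t ∈ A i ∧ β i t = y := by
      intro i
      by_cases h : y ∈ Ioc (c i) (d i)
      · obtain ⟨t, ht⟩ := (hbL i).surjOn h; exact ⟨t, fun _ => ht⟩
      · exact ⟨0, fun h' => absurd h' h⟩
    have eR : ∀ i, ∃ t, y ∈ Ico (c i) (d i) → t ∈ Ioc (0:ℝ) 1 \ A i ∧ β i t = y := by
      intro i
      by_cases h : y ∈ Ico (c i) (d i)
      · obtain ⟨t, ht⟩ := (hbR i).surjOn h; exact ⟨t, fun _ => ht⟩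
      · exact ⟨0, fun h' => absurd h' h⟩
    choose tL htL using eL
    choose tR htR using eR
    set P := (fun i => H (s i) + W (s i) * tL i) '' {i | y ∈ Ioc (c i) (d i)} with hP
    set Q := (fun i => H (s i) + W (s i) * tR i) '' {i | y ∈ Ico (c i) (d i)} with hQ
    have hsec : Sec F y = ({H y} ∪ P) ∪ Q := by
      ext u
      constructor
      · rintro ⟨hu, hFu⟩
        rcases hdec u hu with h | ⟨i, t, ht, rfl⟩
        · left; left
          rw [← hFu, h.1]; exact h.2
        · rw [hF1' i t (Ioc_subset_Icc_self ht)] at hFu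
          by_cases hA' : t ∈ A i
          · left; right
            have hy' := (hbL i).mapsTo hA'
            rw [hFu] at hy'
            refine ⟨i, hy', ?_⟩
            have := (hbL i).injOn hA' (htL i hy').1 (hFu.trans (htL i hy').2.symm)
            simp only [this]
          · right
            have hy' := (hbR i).mapsTo ⟨ht, hA'⟩
            rw [hFu] at hy'
            refine ⟨i, hy', ?_⟩
            have := (hbR i).injOn ⟨ht, hA'⟩ (htR i hy').1 (hFu.trans (htR i hy').2.symm)
            simp only [this]
      · rintro ((rfl | ⟨i, hi, rfl⟩) | ⟨i, hi, rfl⟩)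
        · exact ⟨hblk y hy _ le_rfl (by linarith [hW y]), (hFH y hy).1⟩
        · have := Ioc_subset_Icc_self (hA i (htL i hi).1)
          exact ⟨hmem i _ this, (hF1' i _ this).trans (htL i hi).2⟩
        · have := Ioc_subset_Icc_self (htR i hi).1.1
          exact ⟨hmem i _ this, (hF1' i _ this).trans (htR i hi).2⟩
    have hPe : P.encard = {i | y ∈ Ioc (c i) (d i)}.encard := by
      apply InjOn.encard_image
      intro i hi j hj h
      exact (hinj i j _ (Ioc_subset_Icc_self (hA i (htL i hi).1)) _ (Ioc_subset_Icc_self (hA j (htL j hj).1)) h).1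
    have hQe : Q.encard = {i | y ∈ Ico (c i) (d i)}.encard := by
      apply InjOn.encard_image
      intro i hi j hj h
      exact (hinj i j _ (Ioc_subset_Icc_self (htR i hi).1.1) _ (Ioc_subset_Icc_self (htR j hj).1.1) h).1
    have hd1 : Disjoint {H y} P := by
      rw [disjoint_singleton_left]
      rintro ⟨i, hi, h⟩
      exact hninj y i _ (hA i (htL i hi).1) h.symm
    have hd2 : Disjoint ({H y} ∪ P) Q := by
      rw [disjoint_union_left, disjoint_singleton_left]
      constructor
      · rintro ⟨i, hi, h⟩
        exact hninj y i _ (htR i hi).1.1 h.symm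
      · rw [Set.disjoint_left]
        rintro _ ⟨i, hi, rfl⟩ ⟨j, hj, h⟩
        obtain ⟨rfl, h'⟩ := hinj j i _ (Ioc_subset_Icc_self (htR j hj).1.1) _ (Ioc_subset_Icc_self (hA i (htL i hi).1)) h
        exact (htR j hj).1.2 (h' ▸ (htL j hi).1)
    rw [hsec]
    constructor
    · exact ((countable_singleton _).union ((to_countable _).image _)).union ((to_countable _).image _)
    · rw [encard_union_eq hd2, encard_union_eq hd1, encard_singleton, hPe, hQe]

lemma sufficiency (f : ℝ → ℕ∞) (hf : ∀ y ∈ Set.Icc (0:ℝ) 1, 1 ≤ f y) (h1 : Cond1 f)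
    (h2 : ∀ y ∈ Set.Icc (0:ℝ) 1, f y = ⊤ → CondStar f y) :
    ∃ F : ℝ → ℝ, DarbouxFun F ∧
        Set.MapsTo F (Set.Icc 0 1) (Set.Icc 0 1) ∧ F 0 = 0 ∧ F 1 = 1 ∧
        ∀ y ∈ Set.Icc (0:ℝ) 1, (Sec F y).Countable ∧ (Sec F y).encard = f y := by
  have := germ_select f hf h1 h2
  choose! k l hkl hk hl hj using this
  set L : ℕ → Set ℝ := fun j => {y | y ∈ Icc (0:ℝ) 1 ∧ ((j + 1 : ℕ) : ℕ∞) ≤ k y} with hL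
  set R : ℕ → Set ℝ := fun j => {y | y ∈ Icc (0:ℝ) 1 ∧ ((j + 1 : ℕ) : ℕ∞) ≤ l y} with hR
  have key : ∀ a b : ℝ, 0 ≤ a → b ≤ 1 → ∀ j : ℕ, (∀ z ∈ Ioo a b, ((1 + 2 * (j+1) : ℕ) : ℕ∞) ≤ f z) →
      Ioo a b ⊆ L j ∩ R j := by
    intro a b ha hb j h z hz
    have hz01 : z ∈ Icc (0:ℝ) 1 := ⟨by linarith [hz.1], by linarith [hz.2]⟩
    have := hj z hz01 (j+1) ⟨by linarith [hz.1], z - a, by linarith [hz.1], fun w hw h1 h2 => 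
        h w ⟨by linarith, by linarith [hz.2]⟩⟩
      ⟨by linarith [hz.2], b - z, by linarith [hz.2], fun w hw h1 h2 => 
        h w ⟨by linarith [hz.1], by linarith⟩⟩ (h z hz)
    exact ⟨⟨hz01, this.1⟩, ⟨hz01, this.2⟩⟩
  have hlay := fun j => layer (L j) (R j) (fun y hy => hy.1) (by
    intro y hy
    obtain ⟨hy0, ε, he, h⟩ := hk y hy.1 (j+1) (by omega) hy.2
    refine ⟨min ε y, lt_min he hy0, ?_⟩
    have := min_le_left ε y
    have := min_le_right ε y
    have := hy.1.2
    exact key _ _ (by linarith) (by linarith) j fun z hz => 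
      h z ⟨by linarith [hz.1], by linarith [hz.2]⟩ (by linarith [hz.1]) hz.2) (by
    intro y hy
    obtain ⟨hy0, ε, he, h⟩ := hl y hy.1 (j+1) (by omega) hy.2
    refine ⟨min ε (1 - y), lt_min he (by linarith), ?_⟩
    have := min_le_left ε (1 - y)
    have := min_le_right ε (1 - y)
    have := hy.1.1
    exact key _ _ (by linarith) (by linarith) j fun z hz => 
      h z ⟨by linarith [hz.1], by linarith [hz.2]⟩ hz.1 (by linarith [hz.2]))
  choose T hTc hT1 hTd hTL hTR using hlay
  set I : Set (ℕ × (ℝ × ℝ)) := ⋃ j, (fun p => (j, p)) '' T j with hI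
  have hIm : ∀ x : ℕ × (ℝ × ℝ), x ∈ I ↔ x.2 ∈ T x.1 := by
    rintro ⟨j, p⟩; simp [hI]
  have hIc : I.Countable := countable_iUnion fun j => (hTc j).image _
  have : Countable I := hIc.to_subtype
  obtain ⟨F, hF1, hF2, hF3, hF4, hF5⟩ := construct (ι := I) (fun i => i.1.2.1) (fun i => i.1.2.2)
    (fun i => (hT1 _ _ ((hIm _).1 i.2)).1) (fun i => (hT1 _ _ ((hIm _).1 i.2)).2.1) 
    (fun i => (hT1 _ _ ((hIm _).1 i.2)).2.2)
  refine ⟨F, hF1, hF2, hF3, hF4, fun y hy => ⟨(hF5 y hy).1, ?_⟩⟩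
  rw [(hF5 y hy).2, hkl y hy]
  congr 1
  · congr 1
    rw [← encard_lt_enat (k y)]
    have : {j : ℕ | ((j + 1 : ℕ) : ℕ∞) ≤ k y} = (fun i : I => i.1.1) '' {i | y ∈ Ioc i.1.2.1 i.1.2.2} := by
      ext j
      constructor
      · intro h
        obtain ⟨p, hp, hyp⟩ := (hTL j y).1 ⟨hy, h⟩
        exact ⟨⟨(j, p), (hIm _).2 hp⟩, hyp, rfl⟩
      · rintro ⟨⟨⟨j, p⟩, hp⟩, hyp, rfl⟩
        exact ((hTL j y).2 ⟨p, (hIm _).1 hp, hyp⟩).2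
    rw [this, InjOn.encard_image]
    rintro ⟨⟨j, p⟩, hp⟩ hyp ⟨⟨j', p'⟩, hp'⟩ hyp' h
    simp only at h
    subst h
    have hp := (hIm _).1 hp
    have hp' := (hIm _).1 hp'
    simp only [mem_ofPred_eq] at hyp hyp'
    obtain ⟨z, hz1, hz2⟩ := exists_between (max_lt hyp.1 hyp'.1)
    have := hTd j p hp p' hp' z ⟨(le_max_left _ _).trans_lt hz1, hz2.trans_le hyp.2⟩
      ⟨(le_max_right _ _).trans_lt hz1, hz2.trans_le hyp'.2⟩
    simp [this]
  · rw [← encard_lt_enat (l y)]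
    have : {j : ℕ | ((j + 1 : ℕ) : ℕ∞) ≤ l y} = (fun i : I => i.1.1) '' {i | y ∈ Ico i.1.2.1 i.1.2.2} := by
      ext j
      constructor
      · intro h
        obtain ⟨p, hp, hyp⟩ := (hTR j y).1 ⟨hy, h⟩
        exact ⟨⟨(j, p), (hIm _).2 hp⟩, hyp, rfl⟩
      · rintro ⟨⟨⟨j, p⟩, hp⟩, hyp, rfl⟩
        exact ((hTR j y).2 ⟨p, (hIm _).1 hp, hyp⟩).2
    rw [this, InjOn.encard_image]
    rintro ⟨⟨j, p⟩, hp⟩ hyp ⟨⟨j', p'⟩, hp'⟩ hyp' h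
    simp only at h
    subst h
    have hp := (hIm _).1 hp
    have hp' := (hIm _).1 hp'
    simp only [mem_ofPred_eq] at hyp hyp'
    obtain ⟨z, hz1, hz2⟩ := exists_between (lt_min hyp.2 hyp'.2)
    have := hTd j p hp p' hp' z ⟨hyp.1.trans_lt hz1, hz2.trans_le (min_le_left _ _)⟩
      ⟨hyp'.1.trans_lt hz1, hz2.trans_le (min_le_right _ _)⟩
    simp [this]

lemma encard_two {S S' : Set ℝ} (h : S ⊆ S') {p q : ℝ} (hp : p ∈ S') (hq : q ∈ S') (hp' : p ∉ S)
    (hq' : q ∉ S) (hpq : p ≠ q) : S.encard + 2 ≤ S'.encard := by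
  rw [← encard_pair hpq, ← encard_union_eq]
  · apply encard_le_encard
    rintro x (hx | rfl | rfl)
    exacts [h hx, hp, hq]
  · rw [Set.disjoint_right]
    rintro x (rfl | rfl)
    exacts [hp', hq']

open Classical in
lemma nec_ind (F : ℝ → ℝ) (hD : DarbouxFun F) (hF0 : F 0 = 0) (y : ℝ) (hc : (Sec F y).Countable) (n : ℕ) :
    ∀ X : Finset ℝ, (X : Set ℝ) ⊆ Sec F y → X.card = n + 1 → ∃ a ∈ X, (∀ x ∈ X, x ≤ a) ∧
      ∃ k l : ℕ, k + l = n ∧ ∃ ε > 0,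
      (∀ y₁, y - ε < y₁ → y₁ < y → ((2 * k + (if 0 < y then 1 else 0) : ℕ) : ℕ∞) ≤ (Sec F y₁ ∩ Icc 0 a).encard) ∧
      (∀ y₂, y < y₂ → y₂ < y + ε → ((2 * l : ℕ) : ℕ∞) ≤ (Sec F y₂ ∩ Icc 0 a).encard) := by
  induction n with
  | zero =>
    intro X hX hcard
    obtain ⟨a, rfl⟩ := Finset.card_eq_one.1 hcard
    have ha : a ∈ Sec F y := hX (by simp)
    refine ⟨a, by simp, by simp, 0, 0, rfl, if 0 < y then y else 1, by split_ifs <;> simp [*], ?_, by simp⟩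
    intro y₁ h1 h2
    by_cases hy : 0 < y
    · simp only [if_pos hy] at h1 ⊢
      obtain ⟨x, hx, hxt⟩ := hD 0 a (by simp) ha.1 ha.1.1 y₁ (by
        rw [hF0, ha.2, uIcc_of_le hy.le]; exact ⟨by linarith, h2.le⟩)
      simp only [mul_zero, zero_add, Nat.cast_one]
      rw [one_le_encard_iff_nonempty]
      exact ⟨x, ⟨⟨hx.1, hx.2.trans ha.1.2⟩, hxt⟩, hx⟩
    · simp [hy]
  | succ n ih =>
    intro X hX hcard
    have hne : X.Nonempty := Finset.card_pos.1 (by omega)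
    set b := X.max' hne with hb
    have hbX : b ∈ X := X.max'_mem hne
    obtain ⟨a, haX, hmax, k, l, hkl, ε, he, e1, e2⟩ := ih (X.erase b) (fun x hx => hX (Finset.mem_of_mem_erase hx))
      (by rw [Finset.card_erase_of_mem hbX]; omega)
    have hab : a < b := lt_of_le_of_ne (X.le_max' a (Finset.mem_of_mem_erase haX)) (Finset.ne_of_mem_erase haX)
    have ha : a ∈ Sec F y := hX (Finset.mem_of_mem_erase haX)
    have hbS : b ∈ Sec F y := hX hbX
    refine ⟨b, hbX, fun x hx => X.le_max' x hx, ?_⟩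
    obtain ⟨c, hcI, hcy⟩ : ∃ c ∈ Ioo a b, F c ≠ y := by
      by_contra! h
      have : Ioo a b ⊆ Sec F y := fun x hx => ⟨⟨ha.1.1.trans hx.1.le, hx.2.le.trans hbS.1.2⟩, h x hx⟩
      have := (hc.mono this)
      rw [← Cardinal.le_aleph0_iff_set_countable, Cardinal.mk_Ioo_real hab] at this
      exact absurd this (not_le.2 Cardinal.aleph0_lt_continuum)
    have hc01 : c ∈ Icc (0:ℝ) 1 := ⟨ha.1.1.trans hcI.1.le, hcI.2.le.trans hbS.1.2⟩
    have hsub : ∀ z, Sec F z ∩ Icc 0 a ⊆ Sec F z ∩ Icc 0 b := fun z x hx => ⟨hx.1, hx.2.1, hx.2.2.trans hab.le⟩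
    have step : ∀ z, z ≠ y → z ≠ F c → z ∈ uIcc (F c) y → 
        (Sec F z ∩ Icc 0 a).encard + 2 ≤ (Sec F z ∩ Icc 0 b).encard := by
      intro z hzy hzc hz
      obtain ⟨p, hp, hpz⟩ := hD a c ha.1 hc01 hcI.1.le z (by rw [ha.2, uIcc_comm]; exact hz)
      obtain ⟨q, hq, hqz⟩ := hD c b hc01 hbS.1 hcI.2.le z (by rw [hbS.2]; exact hz)
      have hpa : a < p := lt_of_le_of_ne hp.1 (by rintro rfl; exact hzy (hpz.symm.trans ha.2))
      have hpc : p < c := lt_of_le_of_ne hp.2 (by rintro rfl; exact hzc hpz.symm)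
      have ha0 := ha.1.1
      have hb1 := hbS.1.2
      have hcb := hcI.2
      have hq1 := hq.1
      have hq2 := hq.2
      refine encard_two (hsub z) (p := p) (q := q) ?_ ?_ ?_ ?_ ?_
      · exact ⟨⟨⟨by linarith, by linarith⟩, hpz⟩, by linarith, by linarith⟩
      · exact ⟨⟨⟨by linarith, by linarith⟩, hqz⟩, by linarith, by linarith⟩
      · intro h; linarith [h.2.2]
      · intro h; linarith [h.2.2]
      · intro h; linarith
    rcases lt_or_gt_of_ne hcy with h | h
    · refine ⟨k + 1, l, by omega, min ε (y - F c), lt_min he (by linarith), ?_, ?_⟩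
      · intro y₁ h1 h2
        have := min_le_left ε (y - F c)
        have := min_le_right ε (y - F c)
        have h3 := step y₁ h2.ne (by intro h; linarith) (by rw [uIcc_of_le h.le]; exact ⟨by linarith, h2.le⟩)
        refine le_trans ?_ h3
        have h4 := e1 y₁ (by linarith) h2
        calc ((2 * (k + 1) + (if 0 < y then 1 else 0) : ℕ) : ℕ∞) = ((2 * k + (if 0 < y then 1 else 0) : ℕ) : ℕ∞) + 2 := by
              norm_cast; omega
          _ ≤ _ := by gcongr
      · intro y₂ h1 h2
        exact (e2 y₂ h1 (by linarith [min_le_left ε (y - F c)])).trans (encard_le_encard (hsub _))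
    · refine ⟨k, l + 1, by omega, min ε (F c - y), lt_min he (by linarith), ?_, ?_⟩
      · intro y₁ h1 h2
        exact (e1 y₁ (by linarith [min_le_left ε (F c - y)]) h2).trans (encard_le_encard (hsub _))
      · intro y₂ h1 h2
        have := min_le_left ε (F c - y)
        have := min_le_right ε (F c - y)
        have h3 := step y₂ h1.ne' (by intro h; linarith) (by rw [uIcc_of_ge h.le]; exact ⟨h1.le, by linarith⟩)
        refine le_trans ?_ h3
        have h4 := e2 y₂ h1 (by linarith)
        calc ((2 * (l + 1) : ℕ) : ℕ∞) = ((2 * l : ℕ) : ℕ∞) + 2 := by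
              norm_cast
          _ ≤ _ := by gcongr

open Classical in
lemma nec_main (F : ℝ → ℝ) (hD : DarbouxFun F) (hF0 : F 0 = 0) (hF1 : F 1 = 1) (y : ℝ) 
    (hc : (Sec F y).Countable) (n : ℕ) (hn : ((n + 1 : ℕ) : ℕ∞) ≤ (Sec F y).encard) :
      ∃ k l : ℕ, k + l = n ∧ ∃ ε > 0,
      (∀ y₁, y - ε < y₁ → y₁ < y → ((2 * k + (if 0 < y then 1 else 0) : ℕ) : ℕ∞) ≤ (Sec F y₁).encard) ∧
      (∀ y₂, y < y₂ → y₂ < y + ε → ((2 * l + (if y < 1 then 1 else 0) : ℕ) : ℕ∞) ≤ (Sec F y₂).encard) := by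
  obtain ⟨X, hX, hXc⟩ := exists_subset_encard_eq hn
  have hfin : X.Finite := finite_of_encard_eq_coe hXc
  lift X to Finset ℝ using hfin
  rw [encard_coe_eq_coe_finsetCard] at hXc
  obtain ⟨a, haX, hmax, k, l, hkl, ε, he, e1, e2⟩ := nec_ind F hD hF0 y hc n X hX (by exact_mod_cast hXc)
  have ha : a ∈ Sec F y := hX haX
  refine ⟨k, l, hkl, if y < 1 then min ε (1 - y) else ε, ?_, ?_, ?_⟩
  · split_ifs with h
    · exact lt_min he (by linarith)
    · exact he
  · intro y₁ h1 h2
    refine (e1 y₁ ?_ h2).trans (encard_le_encard inter_subset_left)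
    split_ifs at h1 with h
    · linarith [min_le_left ε (1 - y)]
    · exact h1
  · intro y₂ h1 h2
    by_cases h : y < 1
    · simp only [if_pos h] at h2 ⊢
      have := min_le_left ε (1 - y)
      have := min_le_right ε (1 - y)
      have h4 := e2 y₂ h1 (by linarith)
      obtain ⟨x, hx, hxt⟩ := hD a 1 ha.1 (by simp) ha.1.2 y₂ (by
        rw [hF1, ha.2, uIcc_of_le h.le]; exact ⟨h1.le, by linarith⟩)
      have hax : a < x := lt_of_le_of_ne hx.1 (by rintro rfl; exact h1.ne (ha.2.symm.trans hxt))
      have hx' : x ∉ Sec F y₂ ∩ Icc 0 a := fun h => by linarith [h.2.2]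
      calc ((2 * l + 1 : ℕ) : ℕ∞) = ((2 * l : ℕ) : ℕ∞) + 1 := by norm_cast
        _ ≤ (Sec F y₂ ∩ Icc 0 a).encard + 1 := by gcongr
        _ = (insert x (Sec F y₂ ∩ Icc 0 a)).encard := (encard_insert_of_notMem hx').symm
        _ ≤ _ := by
          apply encard_le_encard
          rintro z (rfl | hz)
          · exact ⟨⟨ha.1.1.trans hx.1, hx.2⟩, hxt⟩
          · exact hz.1
    · simp only [if_neg h] at h2 ⊢
      exact (e2 y₂ h1 h2).trans (encard_le_encard inter_subset_left)

lemma nec_f (f : ℝ → ℕ∞) (F : ℝ → ℝ) (hD : DarbouxFun F) (hm : Set.MapsTo F (Set.Icc 0 1) (Set.Icc 0 1))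
    (hF0 : F 0 = 0) (hF1 : F 1 = 1)
    (hS : ∀ y ∈ Set.Icc (0:ℝ) 1, (Sec F y).Countable ∧ (Sec F y).encard = f y) (y : ℝ) 
    (hy : y ∈ Icc (0:ℝ) 1) (n : ℕ) (hn : ((n + 1 : ℕ) : ℕ∞) ≤ f y) :
      ∃ k l : ℕ, k + l = n ∧ (y = 0 → k = 0) ∧ (y = 1 → l = 0) ∧ ∃ ε > 0,
      (∀ y₁ ∈ Icc (0:ℝ) 1, y - ε < y₁ → y₁ < y → ((2 * k + 1 : ℕ) : ℕ∞) ≤ f y₁) ∧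
      (∀ y₂ ∈ Icc (0:ℝ) 1, y < y₂ → y₂ < y + ε → ((2 * l + 1 : ℕ) : ℕ∞) ≤ f y₂) := by
  obtain ⟨k, l, hkl, ε, he, e1, e2⟩ := nec_main F hD hF0 hF1 y (hS y hy).1 n (by rw [(hS y hy).2]; exact hn)
  have hempty : ∀ z, z ∉ Icc (0:ℝ) 1 → (Sec F z).encard = 0 := by
    intro z hz
    rw [encard_eq_zero, eq_empty_iff_forall_notMem]
    rintro x ⟨hx, rfl⟩
    exact hz (hm hx)
  refine ⟨k, l, hkl, ?_, ?_, ε, he, ?_, ?_⟩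
  · rintro rfl
    have := e1 (-(ε/2)) (by linarith) (by linarith)
    rw [hempty _ (fun h => by linarith [h.1])] at this
    simpa using this
  · rintro rfl
    have := e2 (1 + ε/2) (by linarith) (by linarith)
    rw [hempty _ (fun h => by linarith [h.2])] at this
    simpa using this
  · intro y₁ hy₁ h1 h2
    have := e1 y₁ h1 h2
    rwa [(hS y₁ hy₁).2, if_pos (hy₁.1.trans_lt h2)] at this
  · intro y₂ hy₂ h1 h2
    have := e2 y₂ h1 h2
    rwa [(hS y₂ hy₂).2, if_pos (h1.trans_le hy₂.2)] at this

lemma necessity (f : ℝ → ℕ∞) (hf : ∀ y ∈ Set.Icc (0:ℝ) 1, 1 ≤ f y) (F : ℝ → ℝ) (hD : DarbouxFun F)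
    (hm : Set.MapsTo F (Set.Icc 0 1) (Set.Icc 0 1))
    (hF0 : F 0 = 0) (hF1 : F 1 = 1)
    (hS : ∀ y ∈ Set.Icc (0:ℝ) 1, (Sec F y).Countable ∧ (Sec F y).encard = f y) :
    Cond1 f ∧ ∀ y ∈ Set.Icc (0:ℝ) 1, f y = ⊤ → CondStar f y := by
  have key := nec_f f F hD hm hF0 hF1 hS
  have hfin : ∀ y ∈ Icc (0:ℝ) 1, f y ≠ ⊤ → ∃ n : ℕ, f y = ((n + 1 : ℕ) : ℕ∞) := by
    intro y hy h
    obtain ⟨n, hn⟩ := ENat.ne_top_iff_exists.1 h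
    have hn1 : 1 ≤ n := by have := hf y hy; rw [← hn] at this; exact_mod_cast this
    obtain ⟨m, rfl⟩ := Nat.exists_eq_add_of_le' hn1
    exact ⟨m, hn.symm⟩
  refine ⟨⟨?_, ?_, ?_⟩, ?_⟩
  · intro y hy hft
    have hy' := Ioo_subset_Icc_self hy
    obtain ⟨n, hn⟩ := hfin y hy' hft
    obtain ⟨k, l, hkl, -, -, ε, he, e1, e2⟩ := key y hy' n hn.ge
    refine ⟨ε, he, fun y₁ hy₁ y₂ hy₂ a1 a2 a3 a4 => ?_⟩
    have g1 := e1 y₁ hy₁ a1 a2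
    have g2 := e2 y₂ hy₂ a3 a4
    rw [hn]
    constructor
    · refine le_trans ?_ (add_le_add g1 g2)
      norm_cast; omega
    · intro h
      have t1 : f y₁ ≠ ⊤ := by intro ht; rw [ht, top_add] at h; exact absurd h.symm (by norm_cast)
      have t2 : f y₂ ≠ ⊤ := by intro ht; rw [ht, add_top] at h; exact absurd h.symm (by norm_cast)
      obtain ⟨p, hp⟩ := ENat.ne_top_iff_exists.1 t1
      obtain ⟨q, hq⟩ := ENat.ne_top_iff_exists.1 t2
      rw [← hp] at g1 h ⊢
      rw [← hq] at g2 h ⊢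
      have g1' : 2 * k + 1 ≤ p := by exact_mod_cast g1
      have g2' : 2 * l + 1 ≤ q := by exact_mod_cast g2
      have h' : p + q = 2 * (n + 1) := by exact_mod_cast h
      exact ⟨⟨p, rfl, ⟨k, by omega⟩⟩, ⟨q, rfl, ⟨l, by omega⟩⟩⟩
  · intro hft
    obtain ⟨n, hn⟩ := hfin 0 (by simp) hft
    obtain ⟨k, l, hkl, hk, -, ε, he, e1, e2⟩ := key 0 (by simp) n hn.ge
    refine ⟨ε, he, fun y₂ hy₂ a1 a2 => ?_⟩
    have g2 := e2 y₂ hy₂ a1 (by linarith)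
    have := hk rfl
    rw [hn]
    refine le_trans ?_ (add_le_add le_rfl g2)
    norm_cast; omega
  · intro hft
    obtain ⟨n, hn⟩ := hfin 1 (by simp) hft
    obtain ⟨k, l, hkl, -, hl, ε, he, e1, e2⟩ := key 1 (by simp) n hn.ge
    refine ⟨ε, he, fun y₁ hy₁ a1 a2 => ?_⟩
    have g1 := e1 y₁ hy₁ a1 a2
    have := hl rfl
    rw [hn]
    refine le_trans ?_ (add_le_add g1 le_rfl)
    norm_cast; omega
  · intro y hy hft n
    obtain ⟨k, l, hkl, hk, hl, ε, he, e1, e2⟩ := key y hy n (by rw [hft]; exact le_top)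
    refine ⟨ε, he, ?_, ?_, ?_⟩
    · intro y₁ hy₁ y₂ hy₂ a1 a2 a3 a4
      refine le_trans ?_ (add_le_add (e1 y₁ hy₁ a1 a2) (e2 y₂ hy₂ a3 a4))
      norm_cast; omega
    · rintro rfl y₂ hy₂ a1 a2
      have := hk rfl
      refine le_trans ?_ (add_le_add le_rfl (e2 y₂ hy₂ a1 (by linarith)))
      norm_cast; omega
    · rintro rfl y₁ hy₁ a1 a2
      have := hl rfl
      refine le_trans ?_ (add_le_add (e1 y₁ hy₁ a1 a2) le_rfl)
      norm_cast; omega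

theorem darboux_indicatrix_characterization (f : ℝ → ℕ∞)
    (hf : ∀ y ∈ Set.Icc (0:ℝ) 1, 1 ≤ f y) :
    (∃ F : ℝ → ℝ, DarbouxFun F ∧
        Set.MapsTo F (Set.Icc 0 1) (Set.Icc 0 1) ∧ F 0 = 0 ∧ F 1 = 1 ∧
        ∀ y ∈ Set.Icc (0:ℝ) 1, (Sec F y).Countable ∧ (Sec F y).encard = f y) ↔
      (Cond1 f ∧ ∀ y ∈ Set.Icc (0:ℝ) 1, f y = ⊤ → CondStar f y) := by
  constructor
  · rintro ⟨F, hD, hm, h0, h1, hS⟩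
    exact necessity f hf F hD hm h0 h1 hS
  · rintro ⟨h1, h2⟩
    exact sufficiency f hf h1 h2
end
end

section
/- Let f : [0,1] → ℕ∞ be a preindicatrix. Then there exists a sequence of simple preindicatrices p₀, p₁, p₂, … (each with values in {1,2,3}) with p₀(y) ≥ p₁(y) ≥ p₂(y) ≥ … for every y, such that for every y ∈ [0,1]: f(y) = 1 + Σ_{i=0}^{∞} (pᵢ(y) − 1) in ℕ∞; in particular the series Σᵢ (pᵢ(y) − 1) converges to the finite value f(y) − 1 when f(y) is finite, and diverges to ∞ (i.e., pᵢ(y) ≥ 2 for all i) when f(y) = ∞. -/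
open Set

noncomputable section

def PL (f : ℝ → ℕ∞) (i : ℕ) (y : ℝ) : Prop :=
  ∃ u, 0 ≤ u ∧ u < y ∧ ∀ z, u < z → z < y → ((2 * i + 3 : ℕ) : ℕ∞) ≤ f z

def PR (f : ℝ → ℕ∞) (i : ℕ) (y : ℝ) : Prop :=
  ∃ v, v ≤ 1 ∧ y < v ∧ ∀ z, y < z → z < v → ((2 * i + 3 : ℕ) : ℕ∞) ≤ f z

def PD (f : ℝ → ℕ∞) (i : ℕ) (y : ℝ) : Prop :=
  PL f i y ∧ PR f i y ∧ ((2 * i + 3 : ℕ) : ℕ∞) ≤ f y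

def PS (f : ℝ → ℕ∞) (y : ℝ) : ℕ := sInf {k | ¬ PD f k y}

open Classical in
def PP (f : ℝ → ℕ∞) (i : ℕ) (y : ℝ) : ℕ∞ :=
  if PD f i y then 3 else if ((i + PS f y + 2 : ℕ) : ℕ∞) ≤ f y then 2 else 1

lemma PD_anti {f : ℝ → ℕ∞} {i j : ℕ} {y : ℝ} (hij : i ≤ j) (h : PD f j y) : PD f i y := by
  have hc : ((2 * i + 3 : ℕ) : ℕ∞) ≤ ((2 * j + 3 : ℕ) : ℕ∞) := by
    exact_mod_cast (by omega : 2 * i + 3 ≤ 2 * j + 3)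
  obtain ⟨⟨u, h0, h1, h2⟩, ⟨v, h3, h4, h5⟩, h6⟩ := h
  exact ⟨⟨u, h0, h1, fun z a b => hc.trans (h2 z a b)⟩,
    ⟨v, h3, h4, fun z a b => hc.trans (h5 z a b)⟩, hc.trans h6⟩

lemma PP_cases (f : ℝ → ℕ∞) (i : ℕ) (y : ℝ) : PP f i y = 1 ∨ PP f i y = 2 ∨ PP f i y = 3 := by
  unfold PP; split_ifs <;> simp

lemma PP_eq_three {f : ℝ → ℕ∞} {i : ℕ} {y : ℝ} : PP f i y = 3 ↔ PD f i y := by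
  unfold PP; split_ifs with h1 h2
  · simp [h1]
  · simp only [h1, iff_false]; decide
  · simp only [h1, iff_false]; decide

lemma PP_interval {f : ℝ → ℕ∞} {i : ℕ} {u v : ℝ} (hu : 0 ≤ u) (hv : v ≤ 1)
    (h : ∀ z, u < z → z < v → ((2 * i + 3 : ℕ) : ℕ∞) ≤ f z) (z : ℝ) (h1 : u < z) (h2 : z < v) :
    PP f i z = 3 :=
  PP_eq_three.2 ⟨⟨u, hu, h1, fun w a b => h w a (b.trans h2)⟩,
    ⟨v, hv, h2, fun w a b => h w (h1.trans a) b⟩, h z h1 h2⟩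

lemma not_PL {f : ℝ → ℕ∞} {i : ℕ} {y : ℝ} (h : ¬ PL f i y) (hy0 : 0 < y) (ε : ℝ) (hε : 0 < ε) :
    ∃ z, 0 ≤ z ∧ y - ε < z ∧ z < y ∧ ∃ m : ℕ, f z = m ∧ m ≤ 2 * i + 2 := by
  by_contra hc
  apply h
  refine ⟨max 0 (y - ε), le_max_left _ _, max_lt hy0 (by linarith), fun z a b => ?_⟩
  by_contra hz
  push Not at hz
  obtain ⟨m, hm⟩ := ENat.ne_top_iff_exists.1 hz.ne_top
  rw [← hm] at hz
  have : m < 2 * i + 3 := by exact_mod_cast hz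
  exact hc ⟨z, (le_max_left _ _).trans a.le, (le_max_right _ _).trans_lt a, b, m, hm.symm, by omega⟩

lemma not_PR {f : ℝ → ℕ∞} {i : ℕ} {y : ℝ} (h : ¬ PR f i y) (hy0 : y < 1) (ε : ℝ) (hε : 0 < ε) :
    ∃ z, z ≤ 1 ∧ z < y + ε ∧ y < z ∧ ∃ m : ℕ, f z = m ∧ m ≤ 2 * i + 2 := by
  by_contra hc
  apply h
  refine ⟨min 1 (y + ε), min_le_left _ _, lt_min hy0 (by linarith), fun z a b => ?_⟩
  by_contra hz
  push Not at hz
  obtain ⟨m, hm⟩ := ENat.ne_top_iff_exists.1 hz.ne_top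
  rw [← hm] at hz
  have : m < 2 * i + 3 := by exact_mod_cast hz
  exact hc ⟨z, b.le.trans (min_le_left _ _), b.trans_le (min_le_right _ _), a, m, hm.symm, by omega⟩

lemma key_fin {f : ℝ → ℕ∞} (hf : Preindicatrix f) {y : ℝ} (hy : y ∈ Set.Icc (0:ℝ) 1) {N : ℕ}
    (hN : f y = N) {i j : ℕ} (hL : ¬ PL f j y) (hR : ¬ PR f i y) : N < i + j + 2 := by
  obtain ⟨-, ⟨hc, hc0, hc1⟩, -⟩ := hf
  have ht : f y ≠ ⊤ := by rw [hN]; exact ENat.coe_ne_top _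
  rcases hy.1.eq_or_lt with h0 | h0
  · subst h0
    obtain ⟨ε, hε, h⟩ := hc0 ht
    obtain ⟨z, z1, z2, z3, m, hm, hmi⟩ := not_PR hR one_pos ε hε
    have := h z ⟨z3.le, z1⟩ z3 (by linarith)
    rw [hN, hm] at this
    have : 2 * N ≤ 1 + m := by exact_mod_cast this
    omega
  rcases hy.2.eq_or_lt with h1 | h1
  · subst h1
    obtain ⟨ε, hε, h⟩ := hc1 ht
    obtain ⟨z, z1, z2, z3, m, hm, hmi⟩ := not_PL hL one_pos ε hε
    have := h z ⟨z1, z3.le⟩ z2 z3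
    rw [hN, hm] at this
    have : 2 * N ≤ m + 1 := by exact_mod_cast this
    omega
  obtain ⟨ε, hε, h⟩ := hc y ⟨h0, h1⟩ ht
  obtain ⟨z, z1, z2, z3, m, hm, hmi⟩ := not_PL hL h0 ε hε
  obtain ⟨w, w1, w2, w3, n, hn, hni⟩ := not_PR hR h1 ε hε
  obtain ⟨A, B⟩ := h z ⟨z1, by linarith⟩ w ⟨by linarith, w1⟩ z2 z3 w3 w2
  rw [hN, hm, hn] at A B
  have A' : 2 * N ≤ m + n := by exact_mod_cast A
  by_contra hcon
  obtain ⟨⟨k, hk, hko⟩, ⟨l, hl, hlo⟩⟩ := B (by exact_mod_cast (by omega : m + n = 2 * N))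
  have hk : m = k := by exact_mod_cast hk
  have hl : n = l := by exact_mod_cast hl
  subst hk hl
  obtain ⟨a, ha⟩ := hko
  omega

lemma key_top {f : ℝ → ℕ∞} (hf : Preindicatrix f) {y : ℝ} (hy : y ∈ Set.Icc (0:ℝ) 1)
    (hN : f y = ⊤) (i : ℕ) : PL f i y ∨ PR f i y := by
  by_contra hcon
  push Not at hcon
  obtain ⟨hL, hR⟩ := hcon
  obtain ⟨ε, hε, hc, hc0, hc1⟩ := hf.2.2 y hy hN (4 * i + 5)
  rcases hy.1.eq_or_lt with h0 | h0
  · subst h0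
    obtain ⟨z, z1, z2, z3, m, hm, hmi⟩ := not_PR hR one_pos ε hε
    have := hc0 rfl z ⟨z3.le, z1⟩ z3 (by linarith)
    rw [hm] at this
    have : 4 * i + 5 ≤ 1 + m := by exact_mod_cast this
    omega
  rcases hy.2.eq_or_lt with h1 | h1
  · subst h1
    obtain ⟨z, z1, z2, z3, m, hm, hmi⟩ := not_PL hL one_pos ε hε
    have := hc1 rfl z ⟨z1, z3.le⟩ z2 z3
    rw [hm] at this
    have : 4 * i + 5 ≤ m + 1 := by exact_mod_cast this
    omega
  obtain ⟨z, z1, z2, z3, m, hm, hmi⟩ := not_PL hL h0 ε hε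
  obtain ⟨w, w1, w2, w3, n, hn, hni⟩ := not_PR hR h1 ε hε
  have A := hc z ⟨z1, by linarith⟩ w ⟨by linarith, w1⟩ z2 z3 w3 w2
  rw [hm, hn] at A
  have A' : 4 * i + 5 ≤ m + n := by exact_mod_cast A
  omega

lemma PP_two {f : ℝ → ℕ∞} (hf : Preindicatrix f) {y : ℝ} (hy : y ∈ Set.Icc (0:ℝ) 1) {i : ℕ}
    (h : PP f i y ≠ 1) : PL f i y ∨ PR f i y := by
  unfold PP at h
  split_ifs at h with h1 h2
  · exact Or.inl h1.1
  · by_cases ht : f y = ⊤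
    · exact key_top hf hy ht i
    obtain ⟨N, hN⟩ := ENat.ne_top_iff_exists.1 ht
    have hs : ¬ PD f (PS f y) y := Nat.sInf_mem (s := {k | ¬ PD f k y}) ⟨i, h1⟩
    have hsi : PS f y ≤ i := Nat.sInf_le (s := {k | ¬ PD f k y}) h1
    generalize PS f y = s at *
    rw [← hN] at h2
    have h2 : i + s + 2 ≤ N := by exact_mod_cast h2
    by_contra hcon
    push Not at hcon
    obtain ⟨hL, hR⟩ := hcon
    by_cases hLs : PL f s y
    · by_cases hRs : PR f s y
      · have : ¬ (((2 * s + 3 : ℕ) : ℕ∞) ≤ f y) := fun h => hs ⟨hLs, hRs, h⟩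
        rw [← hN] at this
        have : ¬ (2 * s + 3 ≤ N) := by exact_mod_cast this
        have : i = s := by omega
        subst this
        exact hL hLs
      · have := key_fin hf hy hN.symm hL hRs
        omega
    · have := key_fin hf hy hN.symm hLs hR
      omega
  · exact absurd rfl h

lemma PP_pre {f : ℝ → ℕ∞} (hf : Preindicatrix f) (i : ℕ) : Preindicatrix (PP f i) := by
  refine ⟨fun y _ => ?_, ⟨?_, ?_, ?_⟩, ?_⟩
  · rcases PP_cases f i y with h | h | h <;> rw [h] <;> decide
  · intro y hy _
    by_cases h1 : PP f i y = 1
    · refine ⟨1, one_pos, fun y₁ _ y₂ _ _ _ _ _ => ?_⟩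
      rw [h1]
      rcases PP_cases f i y₁ with h | h | h <;> rcases PP_cases f i y₂ with h' | h' | h' <;>
        rw [h, h']
      · exact ⟨by decide, fun _ => ⟨⟨1, rfl, by decide⟩, ⟨1, rfl, by decide⟩⟩⟩
      all_goals exact ⟨by decide, fun h => absurd h (by decide)⟩
    by_cases h3 : PP f i y = 3
    · obtain ⟨⟨u, hu0, huy, hu⟩, ⟨v, hv0, hvy, hv⟩, -⟩ := PP_eq_three.1 h3
      refine ⟨min (y - u) (v - y), lt_min (by linarith) (by linarith),
        fun y₁ _ y₂ _ a b c d => ?_⟩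
      have e1 := min_le_left (y - u) (v - y)
      have e2 := min_le_right (y - u) (v - y)
      rw [h3, PP_interval hu0 hy.2.le hu y₁ (by linarith) b,
        PP_interval hy.1.le hv0 hv y₂ c (by linarith)]
      exact ⟨by decide, fun _ => ⟨⟨3, rfl, by decide⟩, ⟨3, rfl, by decide⟩⟩⟩
    have h2 : PP f i y = 2 := by
      rcases PP_cases f i y with h | h | h
      · exact absurd h h1
      · exact h
      · exact absurd h h3
    rcases PP_two hf ⟨hy.1.le, hy.2.le⟩ h1 with ⟨u, hu0, huy, hu⟩ | ⟨v, hv0, hvy, hv⟩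
    · refine ⟨y - u, by linarith, fun y₁ _ y₂ _ a b c d => ?_⟩
      rw [h2, PP_interval hu0 hy.2.le hu y₁ (by linarith) b]
      rcases PP_cases f i y₂ with h' | h' | h' <;> rw [h']
      · exact ⟨by decide, fun _ => ⟨⟨3, rfl, by decide⟩, ⟨1, rfl, by decide⟩⟩⟩
      all_goals exact ⟨by decide, fun h => absurd h (by decide)⟩
    · refine ⟨v - y, by linarith, fun y₁ _ y₂ _ a b c d => ?_⟩
      rw [h2, PP_interval hy.1.le hv0 hv y₂ c (by linarith)]
      rcases PP_cases f i y₁ with h' | h' | h' <;> rw [h']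
      · exact ⟨by decide, fun _ => ⟨⟨1, rfl, by decide⟩, ⟨3, rfl, by decide⟩⟩⟩
      all_goals exact ⟨by decide, fun h => absurd h (by decide)⟩
  · intro _
    have hnL : ¬ PL f i 0 := fun ⟨u, a, b, _⟩ => by linarith
    rcases PP_cases f i 0 with h | h | h
    · refine ⟨1, one_pos, fun y₂ _ _ _ => ?_⟩
      rw [h]
      rcases PP_cases f i y₂ with h' | h' | h' <;> rw [h'] <;> decide
    · rcases PP_two hf ⟨le_rfl, zero_le_one⟩ (i := i) (by rw [h]; decide) with h' | ⟨v, hv0, hvy, hv⟩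
      · exact absurd h' hnL
      · refine ⟨v, hvy, fun y₂ _ a b => ?_⟩
        rw [h, PP_interval le_rfl hv0 hv y₂ a b]
        decide
    · exact absurd (PP_eq_three.1 h).1 hnL
  · intro _
    have hnR : ¬ PR f i 1 := fun ⟨u, a, b, _⟩ => by linarith
    rcases PP_cases f i 1 with h | h | h
    · refine ⟨1, one_pos, fun y₂ _ _ _ => ?_⟩
      rw [h]
      rcases PP_cases f i y₂ with h' | h' | h' <;> rw [h'] <;> decide
    · rcases PP_two hf ⟨zero_le_one, le_rfl⟩ (i := i) (by rw [h]; decide) with ⟨u, hu0, huy, hu⟩ | h'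
      · refine ⟨1 - u, by linarith, fun y₂ _ a b => ?_⟩
        rw [h, PP_interval hu0 le_rfl hu y₂ (by linarith) b]
        decide
      · exact absurd h' hnR
    · exact absurd (PP_eq_three.1 h).2.1 hnR
  · intro y _ h
    exfalso
    rcases PP_cases f i y with h' | h' | h' <;> rw [h'] at h <;> revert h <;> decide

lemma PP_anti (f : ℝ → ℕ∞) (i : ℕ) (y : ℝ) : PP f (i + 1) y ≤ PP f i y := by
  have hm : ((i + PS f y + 2 : ℕ) : ℕ∞) ≤ ((i + 1 + PS f y + 2 : ℕ) : ℕ∞) := by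
    exact_mod_cast (by omega : i + PS f y + 2 ≤ i + 1 + PS f y + 2)
  unfold PP
  split_ifs with h1 h2 h3 h4 h5 h6 h7 <;> first
    | decide
    | exact absurd (PD_anti (Nat.le_succ i) h1) (by assumption)
    | (exfalso; exact absurd (hm.trans (by assumption)) (by assumption))

lemma PP_top {f : ℝ → ℕ∞} {y : ℝ} (h : f y = ⊤) (i : ℕ) : 2 ≤ PP f i y := by
  unfold PP
  rw [h]
  split_ifs with h1 h2
  · decide
  · decide
  · exact absurd le_top h2

lemma PP_sum_fin {f : ℝ → ℕ∞} {y : ℝ} {N : ℕ} (hN : f y = N) (h1 : 1 ≤ N) :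
    (N : ℕ∞) = 1 + ∑' i : ℕ, (PP f i y - 1) := by
  have hne : ¬ PD f N y := fun h => by
    have := h.2.2
    rw [hN] at this
    have : 2 * N + 3 ≤ N := by exact_mod_cast this
    omega
  have hs : ¬ PD f (PS f y) y := Nat.sInf_mem (s := {k | ¬ PD f k y}) ⟨N, hne⟩
  have hlt : ∀ k, k < PS f y → PD f k y := fun k hk => by
    by_contra hcon
    exact absurd (Nat.sInf_le (s := {k | ¬ PD f k y}) hcon) (not_le.2 hk)
  have hiff : ∀ k, PD f k y ↔ k < PS f y := fun k => by
    refine ⟨fun h => ?_, hlt k⟩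
    by_contra hcon
    exact hs (PD_anti (not_lt.1 hcon) h)
  have hsN : 2 * PS f y + 1 ≤ N := by
    rcases Nat.eq_zero_or_pos (PS f y) with h0 | h0
    · omega
    have := (hlt (PS f y - 1) (by omega)).2.2
    rw [hN] at this
    have : 2 * (PS f y - 1) + 3 ≤ N := by exact_mod_cast this
    omega
  have hP : ∀ i, PP f i y - 1 = (((if i < PS f y then 1 else 0) +
      (if i < N - 1 - PS f y then 1 else 0) : ℕ) : ℕ∞) := by
    intro i
    unfold PP
    simp only [hiff, hN, Nat.cast_le]
    generalize PS f y = s at *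
    by_cases c1 : i < s
    · rw [if_pos c1, if_pos c1, if_pos (by omega)]; decide
    · by_cases c2 : i + s + 2 ≤ N
      · rw [if_neg c1, if_neg c1, if_pos c2, if_pos (by omega)]; decide
      · rw [if_neg c1, if_neg c1, if_neg c2, if_neg (by omega)]; decide
  simp only [hP]
  generalize PS f y = s at *
  have e : ∀ m, m ≤ N → ∑ i ∈ Finset.range N, (if i < m then 1 else 0) = m := by
    intro m hm
    rw [Finset.sum_boole]
    have : (Finset.range N).filter (fun i => i < m) = Finset.range m := by
      ext i; simp; omega
    rw [this]; simp
  rw [tsum_eq_sum (s := Finset.range N), ← Nat.cast_sum, Finset.sum_add_distrib,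
    e _ (by omega), e _ (by omega)]
  · exact_mod_cast (by omega : N = 1 + (s + (N - 1 - s)))
  · intro i hi
    have hi : N ≤ i := by simpa using hi
    rw [if_neg (by omega), if_neg (by omega)]; rfl

lemma PP_sum_top {g : ℕ → ℕ∞} (h : ∀ i, 1 ≤ g i) : ∑' i, g i = ⊤ := by
  apply HasSum.tsum_eq
  unfold HasSum
  simp only [SummationFilter.unconditional_filter]
  rw [ENat.tendsto_nhds_top_iff_natCast_lt]
  intro n
  filter_upwards [Filter.eventually_ge_atTop (Finset.range (n + 1))] with s hs
  calc (n : ℕ∞) < ((n + 1 : ℕ) : ℕ∞) := by exact_mod_cast Nat.lt_succ_self n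
    _ = ∑ i ∈ Finset.range (n + 1), (1 : ℕ∞) := by simp
    _ ≤ ∑ i ∈ Finset.range (n + 1), g i := Finset.sum_le_sum fun i _ => h i
    _ ≤ ∑ i ∈ s, g i := Finset.sum_le_sum_of_subset hs

theorem preindicatrix_series_decomposition (f : ℝ → ℕ∞) (hf : Preindicatrix f) :
    ∃ p : ℕ → ℝ → ℕ∞,
      (∀ i, Preindicatrix (p i)) ∧
      (∀ i, ∀ y ∈ Set.Icc (0:ℝ) 1, p i y = 1 ∨ p i y = 2 ∨ p i y = 3) ∧
      (∀ i, ∀ y ∈ Set.Icc (0:ℝ) 1, p (i + 1) y ≤ p i y) ∧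
      (∀ y ∈ Set.Icc (0:ℝ) 1, f y = 1 + ∑' i : ℕ, (p i y - 1)) ∧
      (∀ y ∈ Set.Icc (0:ℝ) 1, f y = ⊤ → ∀ i, 2 ≤ p i y) := by
  refine ⟨PP f, PP_pre hf, fun i y _ => PP_cases f i y, fun i y _ => PP_anti f i y, ?_,
    fun y _ h i => PP_top h i⟩
  intro y hy
  by_cases ht : f y = ⊤
  · rw [ht, PP_sum_top, add_top]
    intro i
    exact le_trans (by decide) (tsub_le_tsub_right (PP_top ht i) 1)
  · obtain ⟨N, hN⟩ := ENat.ne_top_iff_exists.1 ht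
    rw [← hN]
    refine PP_sum_fin hN.symm ?_
    have := hf.1 y hy
    rw [← hN] at this
    exact_mod_cast this
end
end
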